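/- arXiv:1910.01371 — 2 statements merged into one kernel-verified Lean document; each statement's English description precedes it below -/
import Mathlib

section
/- For every c > 0 there exists a constant C_c > 0 such that for all ν ≥ 0 and all x ≥ max{(1+c)ν, 2}, | √(π/2) · (x² − ν²)^{1/4} · J_ν(x) − sin(π x g(ν/x) + π/4) | ≤ C_c / x. -/
open Real MeasureTheory Set

/-- The Bessel function of the first kind of order `ν ≥ 0`, for `x > 0`, via the
integral representation. -/
noncomputable def besselJ (ν x : ℝ) : ℝ :=
  (1 / π) * (∫ θ in (0:ℝ)..π, Real.cos (x * Real.sin θ - ν * θ)) -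
    (Real.sin (ν * π) / π) * ∫ t in Set.Ioi (0:ℝ), Real.exp (-x * Real.sinh t - ν * t)

/-- The function `g(t) = (√(1-t²) - t arccos t)/π`. -/
noncomputable def gfun (t : ℝ) : ℝ := (Real.sqrt (1 - t ^ 2) - t * Real.arccos t) / π

/-!
Differentiating Schläfli's integrals shows that `J_ν` solves Bessel's equation on `x > |ν|`. The
Liouville–Green substitution `u = (x² - ν²)^{1/4} J_ν`, with phase `ω = π x g(ν/x)` as the new
variable, turns that equation into `d²u/dω² = -u` up to a term which, for `x ≥ (1 + c)|ν|`, is of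
size `O_c(x⁻²)` with respect to `dx`. Hence the complex envelope `W = (u - i du/dω) e^{-iω}`
satisfies `‖dW/dx‖ ≤ K x⁻² ‖W‖`, and Grönwall's inequality started at `x = ∞` gives
`W(x) = W(∞) + O(1/x)` with a constant depending on `c` only. The limit `W(∞)` concerns each fixed
`ν` separately, so no uniformity is needed there: it is computed from Schläfli's integral by
stationary phase at `θ = π / 2`, which reduces to the Fresnel integral, and it equals
`√(2/π) e^{-iπ/4}`.
-/

open Filter Topology
open Complex (I)

section GronwallAtInfinity

variable {E : Type*} [NormedAddCommGroup E] [NormedSpace ℝ E] {f f' : ℝ → E} {ℓ : E} {K x : ℝ}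

lemma norm_sub_le_gronwallBound_of_norm_deriv_le_div_sq (hK : 0 ≤ K) (hx : 0 < x)
    (hf : ∀ y ≥ x, HasDerivAt f (f' y) y) (hf' : ∀ y ≥ x, ‖f' y‖ ≤ K / y ^ 2 * ‖f y‖)
    {T : ℝ} (hT : x ≤ T) :
    ‖f x - ℓ‖ ≤ gronwallBound ‖f T - ℓ‖ K (K * ‖ℓ‖) (x⁻¹ - T⁻¹) := by
  have hT0 : 0 < T := hx.trans_le hT
  have hpos : ∀ s ∈ Icc T⁻¹ x⁻¹, 0 < s := fun s hs => (inv_pos.2 hT0).trans_le hs.1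
  have hge : ∀ s ∈ Icc T⁻¹ x⁻¹, x ≤ s⁻¹ := fun s hs => (le_inv_comm₀ hx (hpos s hs)).2 hs.2
  have hderiv : ∀ s ∈ Icc T⁻¹ x⁻¹,
      HasDerivAt (fun s => f s⁻¹ - ℓ) (-(s ^ 2)⁻¹ • f' s⁻¹) s := fun s hs =>
    ((hf _ (hge s hs)).scomp s (hasDerivAt_inv (hpos s hs).ne')).sub_const ℓ
  have hbound : ∀ s ∈ Icc T⁻¹ x⁻¹,
      ‖-(s ^ 2)⁻¹ • f' s⁻¹‖ ≤ K * ‖f s⁻¹ - ℓ‖ + K * ‖ℓ‖ := by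
    intro s hs
    have hs0 := hpos s hs
    calc ‖-(s ^ 2)⁻¹ • f' s⁻¹‖ = (s ^ 2)⁻¹ * ‖f' s⁻¹‖ := by
          rw [norm_smul, norm_neg, Real.norm_of_nonneg (by positivity)]
      _ ≤ (s ^ 2)⁻¹ * (K / s⁻¹ ^ 2 * ‖f s⁻¹‖) := by gcongr; exact hf' _ (hge s hs)
      _ = K * ‖f s⁻¹‖ := by field_simp
      _ ≤ K * (‖f s⁻¹ - ℓ‖ + ‖ℓ‖) := by gcongr; exact norm_le_norm_sub_add _ _
      _ = _ := mul_add _ _ _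
  have := norm_le_gronwallBound_of_norm_deriv_right_le (δ := ‖f T - ℓ‖)
    (fun s hs => (hderiv s hs).continuousAt.continuousWithinAt)
    (fun s hs => (hderiv s (Ico_subset_Icc_self hs)).hasDerivWithinAt)
    (by rw [inv_inv]) (fun s hs => hbound s (Ico_subset_Icc_self hs))
    x⁻¹ (right_mem_Icc.2 (inv_anti₀ hx hT))
  rwa [inv_inv] at this

/-- Grönwall's inequality started from infinity: in the variable `s = 1 / y` the hypothesis reads
`‖df/ds‖ ≤ K ‖f‖`, and the initial value at `s = 0` is the limit `ℓ`. -/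
theorem norm_sub_le_of_norm_deriv_le_div_sq_of_tendsto (hK : 0 < K) (hx : 0 < x)
    (hf : ∀ y ≥ x, HasDerivAt f (f' y) y) (hf' : ∀ y ≥ x, ‖f' y‖ ≤ K / y ^ 2 * ‖f y‖)
    (hlim : Tendsto f atTop (𝓝 ℓ)) :
    ‖f x - ℓ‖ ≤ ‖ℓ‖ * (exp (K / x) - 1) := by
  have hδ : Tendsto (fun T => ‖f T - ℓ‖) atTop (𝓝 0) := tendsto_iff_norm_sub_tendsto_zero.1 hlim
  have hexp : Tendsto (fun T : ℝ => exp (K * (x⁻¹ - T⁻¹))) atTop (𝓝 (exp (K * (x⁻¹ - 0)))) :=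
    ((tendsto_inv_atTop_zero.const_sub _).const_mul K).rexp
  have hbound : Tendsto (fun T => gronwallBound ‖f T - ℓ‖ K (K * ‖ℓ‖) (x⁻¹ - T⁻¹)) atTop
      (𝓝 (‖ℓ‖ * (exp (K / x) - 1))) := by
    simp only [gronwallBound_of_K_ne_0 hK.ne']
    convert (hδ.mul hexp).add ((hexp.sub_const 1).const_mul (K * ‖ℓ‖ / K)) using 2
    rw [zero_mul, zero_add, sub_zero, mul_div_cancel_left₀ _ hK.ne', div_eq_mul_inv]
  refine ge_of_tendsto hbound ?_
  filter_upwards [eventually_ge_atTop x] with T hT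
  exact norm_sub_le_gronwallBound_of_norm_deriv_le_div_sq hK.le hx hf hf' hT

end GronwallAtInfinity

section FresnelIntegral

lemma norm_integral_exp_mul_deriv_mul_le {ψ ψ' k k' : ℝ → ℂ} {a b : ℝ} (hab : a ≤ b)
    (hψ : ∀ t ∈ Icc a b, HasDerivAt ψ (ψ' t) t) (hk : ∀ t ∈ Icc a b, HasDerivAt k (k' t) t)
    (hψ' : ContinuousOn ψ' (Icc a b)) (hk' : ContinuousOn k' (Icc a b))
    (hre : ∀ t ∈ Icc a b, (ψ t).re ≤ 0) :
    ‖∫ t in a..b, k t * (Complex.exp (ψ t) * ψ' t)‖ ≤ ‖k a‖ + ‖k b‖ + ∫ t in a..b, ‖k' t‖ := by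
  rw [← uIcc_of_le hab] at hψ hk hψ' hk' hre
  have hexp : ∀ t ∈ uIcc a b, ‖Complex.exp (ψ t)‖ ≤ 1 := fun t ht => by
    rw [Complex.norm_exp]
    exact Real.exp_le_one_iff.2 (hre t ht)
  have hmul : ∀ (z : ℂ), ∀ t ∈ uIcc a b, ‖z * Complex.exp (ψ t)‖ ≤ ‖z‖ := fun z t ht => by
    rw [norm_mul]
    exact mul_le_of_le_one_right (norm_nonneg _) (hexp t ht)
  have hψc : ContinuousOn ψ (uIcc a b) := fun t ht => (hψ t ht).continuousAt.continuousWithinAt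
  have hrest : ‖∫ t in a..b, k' t * Complex.exp (ψ t)‖ ≤ ∫ t in a..b, ‖k' t‖ :=
    intervalIntegral.norm_integral_le_of_norm_le hab
      (Eventually.of_forall fun t ht => hmul _ t (Ioc_subset_Icc_self.trans Icc_subset_uIcc ht))
      hk'.norm.intervalIntegrable
  rw [intervalIntegral.integral_mul_deriv_eq_deriv_mul hk (fun t ht => (hψ t ht).cexp)
    hk'.intervalIntegrable (hψc.cexp.mul hψ').intervalIntegrable]
  calc _ ≤ ‖k b * Complex.exp (ψ b)‖ + ‖k a * Complex.exp (ψ a)‖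
        + ‖∫ t in a..b, k' t * Complex.exp (ψ t)‖ :=
        (norm_sub_le _ _).trans (add_le_add_left (norm_sub_le _ _) _)
    _ ≤ ‖k b‖ + ‖k a‖ + ∫ t in a..b, ‖k' t‖ :=
        add_le_add (add_le_add (hmul _ b right_mem_uIcc) (hmul _ a left_mem_uIcc)) hrest
    _ = _ := by rw [add_comm ‖k b‖]

lemma re_neg_mul_ofReal_sq_nonpos {b : ℂ} (hb : 0 ≤ b.re) (w : ℝ) :
    (-b * (w : ℂ) ^ 2).re ≤ 0 := by
  rw [← Complex.ofReal_pow, Complex.re_mul_ofReal, Complex.neg_re, neg_mul]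
  exact neg_nonpos.2 (by positivity)

lemma integral_inv_sq {R T : ℝ} (hR : 0 < R) (hRT : R ≤ T) :
    ∫ w in R..T, (w ^ 2)⁻¹ = R⁻¹ - T⁻¹ := by
  have h0 : (0 : ℝ) ∉ uIcc R T := by
    rw [uIcc_of_le hRT]
    exact fun h => hR.not_ge h.1
  have := integral_zpow (n := -2) (Or.inr ⟨by norm_num, h0⟩)
  norm_num [div_neg] at this
  exact this

lemma norm_integral_gaussian_le {b : ℂ} (hb : 0 ≤ b.re) (hb0 : b ≠ 0) {R T : ℝ} (hR : 0 < R)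
    (hRT : R ≤ T) : ‖∫ w in R..T, Complex.exp (-b * (w : ℂ) ^ 2)‖ ≤ 1 / (‖b‖ * R) := by
  have hne : ∀ w ∈ Icc R T, (w : ℂ) ≠ 0 := fun w hw =>
    Complex.ofReal_ne_zero.2 (hR.trans_le hw.1).ne'
  have hcoe : ∀ w : ℝ, HasDerivAt (fun w : ℝ => (w : ℂ)) 1 w := fun w =>
    (hasDerivAt_id w).ofReal_comp
  have hcont : ContinuousOn (fun w : ℝ => (2 * b * (w : ℂ) ^ 2)⁻¹) (Icc R T) :=
    ContinuousOn.inv₀ (by fun_prop) fun w hw => by simp [hb0, hne w hw]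
  have hparts := norm_integral_exp_mul_deriv_mul_le hRT
    (ψ := fun w : ℝ => -b * (w : ℂ) ^ 2) (ψ' := fun w : ℝ => -b * (2 * w))
    (k := fun w : ℝ => -(2 * b * w)⁻¹) (k' := fun w : ℝ => (2 * b * (w : ℂ) ^ 2)⁻¹)
    (fun w _ => (((hcoe w).pow 2).const_mul (-b)).congr_deriv (by simp))
    (fun w hw => by
      have := hne w hw
      refine (((hcoe w).const_mul (2 * b)).inv (by simp [hb0, this])).neg.congr_deriv ?_
      field_simp)
    (by fun_prop) hcont (fun w _ => re_neg_mul_ofReal_sq_nonpos hb w)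
  have hintegrand : ∫ w in R..T, -(2 * b * (w : ℂ))⁻¹ *
      (Complex.exp (-b * (w : ℂ) ^ 2) * (-b * (2 * w))) =
      ∫ w in R..T, Complex.exp (-b * (w : ℂ) ^ 2) := by
    refine intervalIntegral.integral_congr fun w hw => ?_
    have := hne w (uIcc_of_le hRT ▸ hw)
    field_simp
  have hvar : ∫ w in R..T, ‖(2 * b * (w : ℂ) ^ 2)⁻¹‖ = (2 * ‖b‖)⁻¹ * (R⁻¹ - T⁻¹) := by
    rw [← integral_inv_sq hR hRT, ← intervalIntegral.integral_const_mul]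
    simp [mul_comm]
  rw [hintegrand, hvar] at hparts
  have hT : 0 < T := hR.trans_le hRT
  refine hparts.trans_eq ?_
  simp only [norm_neg, norm_inv, norm_mul, Complex.norm_ofNat, Complex.norm_real,
    Real.norm_of_nonneg hR.le, Real.norm_of_nonneg hT.le]
  field_simp
  ring

lemma norm_integral_gaussian_sub_le_of_re_pos {b : ℂ} (hb : 0 < b.re) {R : ℝ} (hR : 0 < R) :
    ‖(∫ w in (0 : ℝ)..R, Complex.exp (-b * (w : ℂ) ^ 2)) - (π / b) ^ (1 / 2 : ℂ) / 2‖
      ≤ 1 / (‖b‖ * R) := by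
  have hb0 : b ≠ 0 := by rintro rfl; simp at hb
  have hint : ∀ u v, IntervalIntegrable (fun w : ℝ => Complex.exp (-b * (w : ℂ) ^ 2)) volume u v :=
    fun u v => Continuous.intervalIntegrable (by fun_prop) u v
  have hlim := intervalIntegral_tendsto_integral_Ioi 0
    (integrable_cexp_neg_mul_sq hb).integrableOn tendsto_id
  rw [← integral_gaussian_complex_Ioi hb]
  refine le_of_tendsto (hlim.const_sub _).norm ?_
  filter_upwards [eventually_ge_atTop R] with T hT
  rw [norm_sub_rev, id, intervalIntegral.integral_interval_sub_left (hint 0 T) (hint 0 R)]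
  exact norm_integral_gaussian_le hb.le hb0 hR hT

/-- Regularise by `b + ε` and let `ε → 0⁺`: the bound for positive real part is uniform in `ε`. -/
lemma norm_integral_gaussian_sub_le {b : ℂ} (hb : 0 ≤ b.re) (hb0 : b ≠ 0) {R : ℝ} (hR : 0 < R) :
    ‖(∫ w in (0 : ℝ)..R, Complex.exp (-b * (w : ℂ) ^ 2)) - (π / b) ^ (1 / 2 : ℂ) / 2‖
      ≤ 1 / (‖b‖ * R) := by
  have hreg : Tendsto (fun ε : ℝ => b + (ε : ℂ)) (𝓝[>] 0) (𝓝 b) := by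
    have : Continuous fun ε : ℝ => b + (ε : ℂ) := by fun_prop
    simpa using (this.tendsto 0).mono_left nhdsWithin_le_nhds
  have hint : Continuous fun z : ℂ => ∫ w in (0 : ℝ)..R, Complex.exp (-z * (w : ℂ) ^ 2) :=
    intervalIntegral.continuous_parametric_intervalIntegral_of_continuous' (by fun_prop) 0 R
  have hslit : (π / b : ℂ) ∈ Complex.slitPlane := by
    have hnorm : 0 < Complex.normSq b := Complex.normSq_pos.2 hb0
    rw [div_eq_mul_inv, Complex.mem_slitPlane_iff, Complex.re_ofReal_mul, Complex.im_ofReal_mul,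
      Complex.inv_re, Complex.inv_im]
    rcases hb.lt_or_eq with h | h
    · exact Or.inl (by positivity)
    · have him : b.im ≠ 0 := fun him => hb0 (Complex.ext h.symm him)
      exact Or.inr (by simp [pi_ne_zero, him, hb0])
  have hroot : Tendsto (fun ε : ℝ => ((π : ℂ) / (b + ε)) ^ (1 / 2 : ℂ) / 2) (𝓝[>] 0)
      (𝓝 ((π / b) ^ (1 / 2 : ℂ) / 2)) :=
    (((continuousAt_cpow_const hslit).tendsto.comp (tendsto_const_nhds.div hreg hb0)).div_const 2)
  have hbound : Tendsto (fun ε : ℝ => 1 / (‖b + (ε : ℂ)‖ * R)) (𝓝[>] 0) (𝓝 (1 / (‖b‖ * R))) :=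
    tendsto_const_nhds.div (hreg.norm.mul_const R) (by simp [hb0, hR.ne'])
  refine le_of_tendsto_of_tendsto (((hint.tendsto b).comp hreg).sub hroot).norm hbound ?_
  filter_upwards [self_mem_nhdsWithin] with ε hε
  refine norm_integral_gaussian_sub_le_of_re_pos ?_ hR
  rw [Complex.add_re, Complex.ofReal_re]
  exact add_pos_of_nonneg_of_pos hb hε

lemma tendsto_integral_gaussian {b : ℂ} (hb : 0 ≤ b.re) (hb0 : b ≠ 0) :
    Tendsto (fun R : ℝ => ∫ w in (0 : ℝ)..R, Complex.exp (-b * (w : ℂ) ^ 2)) atTop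
      (𝓝 ((π / b) ^ (1 / 2 : ℂ) / 2)) := by
  have hbound : Tendsto (fun R : ℝ => 1 / (‖b‖ * R)) atTop (𝓝 0) :=
    tendsto_const_nhds.div_atTop (tendsto_id.const_mul_atTop (norm_pos_iff.2 hb0))
  refine tendsto_iff_norm_sub_tendsto_zero.2 (squeeze_zero' (by simp) ?_ hbound)
  filter_upwards [eventually_gt_atTop 0] with R hR
  exact norm_integral_gaussian_sub_le hb hb0 hR

lemma pi_div_I_cpow_half : ((π : ℂ) / I) ^ (1 / 2 : ℂ) = √π * Complex.exp (-(π / 4) * I) := by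
  have hsqrt : ((√π : ℝ) : ℂ) = Complex.exp ((Real.log π : ℝ) * (1 / 2)) := by
    rw [Real.sqrt_eq_rpow, Real.rpow_def_of_pos pi_pos]
    push_cast
    rfl
  rw [Complex.div_I, ← mul_neg, Complex.cpow_def_of_ne_zero (by simp [pi_ne_zero]),
    Complex.log_ofReal_mul pi_pos (by simp), Complex.log_neg_I, hsqrt, ← Complex.exp_add]
  congr 1
  ring

lemma tendsto_fresnelIntegral :
    Tendsto (fun R : ℝ => ∫ w in (0 : ℝ)..R, Complex.exp (-I * (w : ℂ) ^ 2)) atTop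
      (𝓝 (√π / 2 * Complex.exp (-(π / 4) * I))) := by
  convert tendsto_integral_gaussian (b := I) (by simp) Complex.I_ne_zero using 2
  rw [pi_div_I_cpow_half]
  ring

end FresnelIntegral

section StationaryPhase

lemma norm_div_sin_pow_le {z : ℂ} {B t : ℝ} {n : ℕ} (ht : t ∈ Ioc 0 (π / 2))
    (hz : ‖z‖ ≤ B * t ^ n) : ‖z / (sin t : ℂ) ^ n‖ ≤ B * (π / 2) ^ n := by
  have htn : 0 < t ^ n := pow_pos ht.1 n
  have hB : 0 ≤ B := nonneg_of_mul_nonneg_left ((norm_nonneg z).trans hz) htn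
  have hsin : 0 < sin t := sin_pos_of_pos_of_lt_pi ht.1 (by linarith [ht.2, pi_pos])
  have hjordan : t ≤ π / 2 * sin t := by
    have := Real.mul_le_sin ht.1.le ht.2
    rw [div_mul_eq_mul_div, div_le_iff₀ pi_pos] at this
    linarith
  rw [norm_div, norm_pow, Complex.norm_real, Real.norm_of_nonneg hsin.le,
    div_le_iff₀ (pow_pos hsin n), mul_assoc, ← mul_pow]
  exact hz.trans (by gcongr; exact ht.1.le)

lemma norm_le_mul_of_norm_deriv_le {E : Type*} [NormedAddCommGroup E] [NormedSpace ℝ E]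
    {f f' : ℝ → E} {B T : ℝ} (hT : 0 ≤ T) (hf0 : f 0 = 0)
    (hf : ∀ t ∈ Icc 0 T, HasDerivAt f (f' t) t) (hf' : ∀ t ∈ Icc 0 T, ‖f' t‖ ≤ B) :
    ‖f T‖ ≤ B * T := by
  have := (convex_Icc 0 T).norm_image_sub_le_of_norm_hasDerivWithin_le
    (fun t ht => (hf t ht).hasDerivWithinAt) hf' (left_mem_Icc.2 hT) (right_mem_Icc.2 hT)
  simpa [hf0, abs_of_nonneg hT] using this

variable {r : ℝ → ℂ}

lemma exists_norm_div_sin_le (hr : ContDiff ℝ 1 r) (h0 : r 0 = 0) :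
    ∃ M, ∀ t ∈ Ioc 0 (π / 2), ‖r t / sin t‖ ≤ M := by
  obtain ⟨B, hB⟩ := (isCompact_Icc (a := 0) (b := π / 2)).exists_bound_of_continuousOn
    (hr.continuous_deriv le_rfl).continuousOn
  refine ⟨B * (π / 2) ^ 1, fun t ht => ?_⟩
  have hrt : ‖r t‖ ≤ B * t := norm_le_mul_of_norm_deriv_le ht.1.le h0
    (fun s _ => (hr.differentiable one_ne_zero s).hasDerivAt)
    (fun s hs => hB s ⟨hs.1, hs.2.trans ht.2⟩)
  simpa using norm_div_sin_pow_le (n := 1) ht (by simpa using hrt)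

lemma hasDerivAt_div_sin (hr : Differentiable ℝ r) {t : ℝ} (ht : sin t ≠ 0) :
    HasDerivAt (fun t => r t / sin t) ((deriv r t * sin t - r t * cos t) / sin t ^ 2) t :=
  (hr t).hasDerivAt.div (hasDerivAt_sin t).ofReal_comp (by exact_mod_cast ht)

lemma exists_norm_deriv_div_sin_le (hr : ContDiff ℝ 2 r) (h0 : r 0 = 0) :
    ∃ M, ∀ t ∈ Ioc 0 (π / 2), ‖(deriv r t * sin t - r t * cos t) / (sin t : ℂ) ^ 2‖ ≤ M := by
  have hr' : ContDiff ℝ 1 (deriv r) := hr.deriv'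
  obtain ⟨B, hB⟩ := (isCompact_Icc (a := 0) (b := π / 2)).exists_bound_of_continuousOn
    ((hr'.continuous_deriv le_rfl).add hr.continuous).continuousOn
  have hB0 : 0 ≤ B := (norm_nonneg _).trans (hB 0 ⟨le_rfl, by positivity⟩)
  have hnum : ∀ t, HasDerivAt (fun t => deriv r t * (sin t : ℂ) - r t * cos t)
      ((deriv (deriv r) t + r t) * sin t) t := fun t => by
    refine (((hr'.differentiable one_ne_zero t).hasDerivAt.mul (hasDerivAt_sin t).ofReal_comp).sub
      ((hr.differentiable two_ne_zero t).hasDerivAt.mul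
        (hasDerivAt_cos t).ofReal_comp)).congr_deriv ?_
    push_cast
    ring
  refine ⟨B * (π / 2) ^ 2, fun t ht => norm_div_sin_pow_le ht ?_⟩
  rw [sq, ← mul_assoc]
  refine norm_le_mul_of_norm_deriv_le ht.1.le (by simp [h0]) (fun s _ => hnum s) fun s hs => ?_
  rw [norm_mul, Complex.norm_real]
  exact mul_le_mul (hB s ⟨hs.1, hs.2.trans ht.2⟩)
    ((Real.abs_sin_le_abs (x := s)).trans ((abs_of_nonneg hs.1).trans_le hs.2)) (norm_nonneg _) hB0

lemma norm_integral_exp_cos_mul_le_of_pos {M M' : ℝ} (hr : ContDiff ℝ 1 r)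
    (hM : ∀ t ∈ Ioc 0 (π / 2), ‖r t / sin t‖ ≤ M)
    (hM' : ∀ t ∈ Ioc 0 (π / 2), ‖(deriv r t * sin t - r t * cos t) / (sin t : ℂ) ^ 2‖ ≤ M')
    {x ε : ℝ} (hx : 0 < x) (hε : ε ∈ Ioc 0 (π / 2)) :
    ‖∫ t in ε..(π / 2), Complex.exp ((x * cos t : ℝ) * I) * r t‖
      ≤ (M + M + M' * (π / 2 - ε)) / x := by
  have hmem : ∀ t ∈ Icc ε (π / 2), t ∈ Ioc 0 (π / 2) := fun t ht => ⟨hε.1.trans_le ht.1, ht.2⟩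
  have hsin : ∀ t ∈ Icc ε (π / 2), sin t ≠ 0 := fun t ht =>
    (sin_pos_of_pos_of_lt_pi (hmem t ht).1 (by linarith [ht.2, pi_pos])).ne'
  have hk' : ContinuousOn (fun t => (deriv r t * sin t - r t * cos t) / (sin t : ℂ) ^ 2)
      (Icc ε (π / 2)) := by
    have := hr.continuous
    have := hr.continuous_deriv le_rfl
    refine ContinuousOn.div (by fun_prop) (by fun_prop) fun t ht => ?_
    exact_mod_cast pow_ne_zero 2 (hsin t ht)
  have hparts := norm_integral_exp_mul_deriv_mul_le hε.2
    (ψ := fun t => (x * cos t : ℝ) * I) (ψ' := fun t => (x * -sin t : ℝ) * I)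
    (fun t _ => ((hasDerivAt_cos t).const_mul x).ofReal_comp.mul_const I)
    (fun t ht => hasDerivAt_div_sin (hr.differentiable one_ne_zero) (hsin t ht))
    (by fun_prop) hk' (fun t _ => by simp)
  have hvar : ∫ t in ε..(π / 2), ‖(deriv r t * sin t - r t * cos t) / (sin t : ℂ) ^ 2‖
      ≤ M' * (π / 2 - ε) := by
    refine (intervalIntegral.integral_mono_on hε.2 (hk'.norm.intervalIntegrable_of_Icc hε.2)
      intervalIntegrable_const fun t ht => hM' t (hmem t ht)).trans_eq ?_
    rw [intervalIntegral.integral_const, smul_eq_mul, mul_comm]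
  have hintegrand : ∫ t in ε..(π / 2), r t / sin t *
        (Complex.exp ((x * cos t : ℝ) * I) * ((x * -sin t : ℝ) * I)) =
      -(x * I) * ∫ t in ε..(π / 2), Complex.exp ((x * cos t : ℝ) * I) * r t := by
    rw [← intervalIntegral.integral_const_mul]
    refine intervalIntegral.integral_congr fun t ht => ?_
    have : (sin t : ℂ) ≠ 0 := mod_cast hsin t (uIcc_of_le hε.2 ▸ ht)
    simp only [Complex.ofReal_mul, Complex.ofReal_neg]
    field_simp
  rw [hintegrand, norm_mul, norm_neg, norm_mul, Complex.norm_I, mul_one, Complex.norm_real,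
    Real.norm_of_nonneg hx.le] at hparts
  rw [le_div_iff₀' hx]
  exact hparts.trans (add_le_add (add_le_add (hM ε hε) (hM _ ⟨by positivity, le_rfl⟩)) hvar)

lemma exists_norm_integral_exp_cos_mul_le (hr : ContDiff ℝ 2 r) (h0 : r 0 = 0) :
    ∃ C, ∀ x > 0, ‖∫ t in 0..(π / 2), Complex.exp ((x * cos t : ℝ) * I) * r t‖ ≤ C / x := by
  obtain ⟨M, hM⟩ := exists_norm_div_sin_le (hr.of_le one_le_two) h0
  obtain ⟨M', hM'⟩ := exists_norm_deriv_div_sin_le hr h0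
  have hrc := hr.continuous
  refine ⟨M + M + M' * (π / 2 - 0), fun x hx => ?_⟩
  have hint : Continuous fun ε => ∫ t in ε..(π / 2), Complex.exp ((x * cos t : ℝ) * I) * r t := by
    simp only [intervalIntegral.integral_symm (π / 2)]
    exact (intervalIntegral.continuous_primitive
      (fun a b => Continuous.intervalIntegrable (by fun_prop) a b) _).neg
  have hbound : Continuous fun ε => (M + M + M' * (π / 2 - ε)) / x := by fun_prop
  refine le_of_tendsto_of_tendsto ((hint.tendsto 0).mono_left nhdsWithin_le_nhds).norm
    ((hbound.tendsto 0).mono_left (nhdsWithin_le_nhds (s := Ioi 0))) ?_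
  filter_upwards [Ioc_mem_nhdsGT (by positivity : (0 : ℝ) < π / 2)] with ε hε
  exact norm_integral_exp_cos_mul_le_of_pos (hr.of_le one_le_two) hM hM' hx hε

/-- The substitution `w = √(2x) sin (t / 2)`, under which `x cos t = x - w²`. -/
lemma sqrt_mul_integral_exp_cos_mul_cos_half {x : ℝ} (hx : 0 ≤ x) :
    (√x : ℂ) * ∫ t in 0..(π / 2), Complex.exp ((x * cos t : ℝ) * I) * cos (t / 2) =
      √2 * Complex.exp (x * I) * ∫ w in (0 : ℝ)..√x, Complex.exp (-I * (w : ℂ) ^ 2) := by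
  have hsqrt2 : √2 * √2 = 2 := Real.mul_self_sqrt zero_le_two
  have hderiv : ∀ t : ℝ, HasDerivAt (fun t => √x * √2 * sin (t / 2))
      (√x * √2 / 2 * cos (t / 2)) t := fun t => by
    refine (((hasDerivAt_id t).div_const 2).sin.const_mul (√x * √2)).congr_deriv ?_
    simp only [id]
    ring
  have hsub := intervalIntegral.integral_deriv_smul_comp (a := 0) (b := π / 2)
    (g := fun w : ℝ => Complex.exp (-I * (w : ℂ) ^ 2)) (fun t _ => hderiv t)
    (by fun_prop) (by fun_prop)
  have hend : √x * √2 * sin (π / 2 / 2) = √x := by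
    rw [div_div, show (2 : ℝ) * 2 = 4 by norm_num, sin_pi_div_four]
    linear_combination √x / 2 * hsqrt2
  have hphase : ∀ t, x * cos t = x - (√x * √2 * sin (t / 2)) ^ 2 := fun t => by
    have hcos : cos t = 1 - 2 * sin (t / 2) ^ 2 := by
      rw [← cos_two_mul_eq_one_sub, mul_div_cancel₀ t two_ne_zero]
    rw [hcos, mul_pow, mul_pow, Real.sq_sqrt hx, sq √2, hsqrt2]
    ring
  rw [zero_div, sin_zero, mul_zero, hend] at hsub
  rw [← hsub, ← intervalIntegral.integral_const_mul, ← intervalIntegral.integral_const_mul]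
  refine intervalIntegral.integral_congr fun t _ => ?_
  have hexp : Complex.exp ((x * cos t : ℝ) * I) =
      Complex.exp (x * I) * Complex.exp (-I * ((√x * √2 * sin (t / 2) : ℝ) : ℂ) ^ 2) := by
    rw [hphase, ← Complex.exp_add]
    push_cast
    ring_nf
  have hsqrt2' : (√2 : ℂ) * √2 = 2 := mod_cast hsqrt2
  simp only [Function.comp_apply, Complex.real_smul, hexp]
  push_cast
  linear_combination (-(√x : ℂ) * Complex.exp (x * I) *
    Complex.exp (-I * (√x * √2 * Complex.sin (t / 2)) ^ 2) * Complex.cos (t / 2) / 2) * hsqrt2'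

lemma sqrt_pi_div_two : √(π / 2) = √2 * (√π / 2) := by
  rw [Real.sqrt_div pi_pos.le, div_eq_iff (by positivity)]
  linear_combination -√π / 2 * Real.mul_self_sqrt zero_le_two

lemma tendsto_sqrt_mul_integral_exp_cos_mul_cos_half :
    Tendsto (fun x : ℝ =>
      √x * (∫ t in 0..(π / 2), Complex.exp ((x * cos t : ℝ) * I) * cos (t / 2)) -
        √(π / 2) * Complex.exp ((x - π / 4 : ℝ) * I)) atTop (𝓝 0) := by
  have hfresnel := (tendsto_iff_norm_sub_tendsto_zero.1
    (tendsto_fresnelIntegral.comp tendsto_sqrt_atTop)).const_mul √2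
  rw [mul_zero] at hfresnel
  refine squeeze_zero_norm' ?_ hfresnel
  filter_upwards [eventually_ge_atTop 0] with x hx
  have hmain : (√(π / 2) : ℂ) * Complex.exp ((x - π / 4 : ℝ) * I) =
      √2 * Complex.exp (x * I) * (√π / 2 * Complex.exp (-(π / 4) * I)) := by
    rw [sqrt_pi_div_two, show ((x - π / 4 : ℝ) : ℂ) * I = x * I + -(π / 4) * I by push_cast; ring,
      Complex.exp_add]
    push_cast
    ring
  rw [sqrt_mul_integral_exp_cos_mul_cos_half hx, hmain, ← mul_sub, norm_mul, norm_mul,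
    Complex.norm_exp_ofReal_mul_I, mul_one, Complex.norm_real,
    Real.norm_of_nonneg (Real.sqrt_nonneg 2)]
  rfl

theorem tendsto_sqrt_mul_integral_exp_cos_mul {f : ℝ → ℂ} (hf : ContDiff ℝ 2 f) :
    Tendsto (fun x : ℝ => √x * (∫ t in 0..(π / 2), Complex.exp ((x * cos t : ℝ) * I) * f t) -
      √(π / 2) * Complex.exp ((x - π / 4 : ℝ) * I) * f 0) atTop (𝓝 0) := by
  have hr : ContDiff ℝ 2 fun t : ℝ => f t - cos (t / 2) * f 0 := by
    have : ContDiff ℝ 2 fun t : ℝ => ((cos (t / 2) : ℝ) : ℂ) :=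
      Complex.ofRealCLM.contDiff.comp (contDiff_cos.comp (contDiff_id.div_const 2))
    fun_prop
  obtain ⟨C, hC⟩ := exists_norm_integral_exp_cos_mul_le hr (by simp)
  have hrem : Tendsto (fun x : ℝ => (√x : ℂ) * ∫ t in 0..(π / 2),
      Complex.exp ((x * cos t : ℝ) * I) * (f t - cos (t / 2) * f 0)) atTop (𝓝 0) := by
    refine squeeze_zero_norm' ?_
      (tendsto_const_nhds.div_atTop tendsto_sqrt_atTop : Tendsto (fun x => C / √x) atTop (𝓝 0))
    filter_upwards [eventually_gt_atTop 0] with x hx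
    rw [norm_mul, Complex.norm_real, Real.norm_of_nonneg (Real.sqrt_nonneg x)]
    calc _ ≤ √x * (C / x) := by gcongr; exact hC x hx
      _ = C / √x := by rw [mul_div_left_comm, Real.sqrt_div_self', mul_one_div]
  have hsplit : ∀ x : ℝ, ∫ t in 0..(π / 2), Complex.exp ((x * cos t : ℝ) * I) * f t =
      (∫ t in 0..(π / 2), Complex.exp ((x * cos t : ℝ) * I) * (f t - cos (t / 2) * f 0)) +
      (∫ t in 0..(π / 2), Complex.exp ((x * cos t : ℝ) * I) * cos (t / 2)) * f 0 := fun x => by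
    have hfc := hf.continuous
    rw [← intervalIntegral.integral_mul_const, ← intervalIntegral.integral_add]
    · exact intervalIntegral.integral_congr fun t _ => by ring
    all_goals exact Continuous.intervalIntegrable (by fun_prop) _ _
  have hlim := hrem.add (tendsto_sqrt_mul_integral_exp_cos_mul_cos_half.mul_const (f 0))
  rw [zero_mul, zero_add] at hlim
  refine hlim.congr fun x => ?_
  rw [hsplit]
  ring

end StationaryPhase

section SchlafliIntegrals

/-- The `k`-th derivative in `x` of the oscillatory part `∫₀^π cos (x sin θ - ν θ) dθ` of
Schläfli's integral for `J_ν`; differentiating a cosine shifts its phase by `π / 2`. -/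
noncomputable def schlafliOsc (ν : ℝ) (k : ℕ) (x : ℝ) : ℝ :=
  ∫ θ in 0..π, sin θ ^ k * cos (x * sin θ - ν * θ + k * (π / 2))

/-- The `k`-th derivative in `x` of the exponentially decaying part
`∫₀^∞ exp (-x sinh t - ν t) dt` of Schläfli's integral for `J_ν`. -/
noncomputable def schlafliDecay (ν : ℝ) (k : ℕ) (x : ℝ) : ℝ :=
  ∫ t in Ioi 0, (-sinh t) ^ k * exp (-x * sinh t - ν * t)

variable {ν x δ : ℝ} {k : ℕ}

lemma hasDerivAt_schlafliOsc : HasDerivAt (schlafliOsc ν k) (schlafliOsc ν (k + 1) x) x := by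
  refine (intervalIntegral.hasDerivAt_integral_of_dominated_loc_of_deriv_le (s := univ)
    (F := fun x θ => sin θ ^ k * cos (x * sin θ - ν * θ + k * (π / 2)))
    (F' := fun x θ => sin θ ^ (k + 1) * cos (x * sin θ - ν * θ + (k + 1 : ℕ) * (π / 2)))
    (bound := fun _ => 1) univ_mem ?_ (Continuous.intervalIntegrable (by fun_prop) _ _)
    (Continuous.aestronglyMeasurable (by fun_prop)) ?_ intervalIntegrable_const ?_).2
  · exact Eventually.of_forall fun y => Continuous.aestronglyMeasurable (by fun_prop)
  · refine Eventually.of_forall fun θ _ y _ => ?_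
    rw [norm_mul, norm_pow]
    exact mul_le_one₀ (pow_le_one₀ (norm_nonneg _) (abs_sin_le_one _)) (norm_nonneg _)
      (abs_cos_le_one _)
  · refine Eventually.of_forall fun θ _ y _ => ?_
    have hphase : HasDerivAt (fun y => y * sin θ - ν * θ + k * (π / 2)) (sin θ) y := by
      simpa using (((hasDerivAt_id y).mul_const (sin θ)).sub_const (ν * θ)).add_const (k * (π / 2))
    refine (hphase.cos.const_mul (sin θ ^ k)).congr_deriv ?_
    rw [Nat.cast_succ, add_one_mul, ← add_assoc, cos_add_pi_div_two]
    ring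

lemma schlafliOsc_ode (ν x : ℝ) :
    x ^ 2 * schlafliOsc ν 2 x + x * schlafliOsc ν 1 x + (x ^ 2 - ν ^ 2) * schlafliOsc ν 0 x =
      (x - ν) * sin (ν * π) := by
  have hprim : ∀ θ, HasDerivAt (fun θ => (x * cos θ + ν) * sin (x * sin θ - ν * θ))
      (x ^ 2 * (sin θ ^ 2 * cos (x * sin θ - ν * θ + (2 : ℕ) * (π / 2))) +
        x * (sin θ ^ 1 * cos (x * sin θ - ν * θ + (1 : ℕ) * (π / 2))) +
        (x ^ 2 - ν ^ 2) * (sin θ ^ 0 * cos (x * sin θ - ν * θ + (0 : ℕ) * (π / 2)))) θ := by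
    intro θ
    have hphase : HasDerivAt (fun θ => x * sin θ - ν * θ) (x * cos θ - ν * 1) θ :=
      ((hasDerivAt_sin θ).const_mul x).sub ((hasDerivAt_id θ).const_mul ν)
    refine ((((hasDerivAt_cos θ).const_mul x).add_const ν).mul hphase.sin).congr_deriv ?_
    rw [Nat.cast_two, mul_div_cancel₀ π two_ne_zero, cos_add_pi, Nat.cast_one, one_mul,
      cos_add_pi_div_two, Nat.cast_zero, zero_mul, add_zero]
    linear_combination x ^ 2 * cos (x * sin θ - ν * θ) * sin_sq_add_cos_sq θ
  have hint := intervalIntegral.integral_eq_sub_of_hasDerivAt (a := 0) (b := π)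
    (fun θ _ => hprim θ) (Continuous.intervalIntegrable (by fun_prop) _ _)
  rw [intervalIntegral.integral_add, intervalIntegral.integral_add,
    intervalIntegral.integral_const_mul, intervalIntegral.integral_const_mul,
    intervalIntegral.integral_const_mul] at hint
  · rw [schlafliOsc, schlafliOsc, schlafliOsc, hint]
    simp only [sin_pi, cos_pi, sin_zero, mul_zero, zero_sub, sin_neg, sub_self]
    ring
  all_goals exact Continuous.intervalIntegrable (by fun_prop) _ _

lemma pow_le_factorial_div_pow_mul_exp {a s : ℝ} (ha : 0 < a) (hs : 0 ≤ s) (k : ℕ) :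
    s ^ k ≤ k.factorial / a ^ k * exp (a * s) := by
  have := Real.pow_div_factorial_le_exp (a * s) (by positivity) k
  rw [div_le_iff₀ (by positivity), mul_pow] at this
  rw [div_mul_eq_mul_div, le_div_iff₀' (by positivity)]
  linarith

lemma norm_neg_sinh_pow_mul_exp_le (hδ : 0 < δ) (hx : |ν| + δ ≤ x) (k : ℕ) {t : ℝ} (ht : 0 ≤ t) :
    ‖(-sinh t) ^ k * exp (-x * sinh t - ν * t)‖
      ≤ k.factorial / (δ / 2) ^ k * exp (-(δ / 2) * t) := by
  have hsinh : t ≤ sinh t := self_le_sinh_iff.2 ht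
  have hsinh0 : 0 ≤ sinh t := ht.trans hsinh
  have hexponent : δ / 2 * sinh t + (-x * sinh t - ν * t) ≤ -(δ / 2) * t := by
    have h₁ : (|ν| + δ) * sinh t ≤ x * sinh t := by gcongr
    have h₂ : |ν| * t ≤ |ν| * sinh t := by gcongr
    have h₃ : -(ν * t) ≤ |ν| * t := by
      rw [← neg_mul]
      exact mul_le_mul_of_nonneg_right (neg_le_abs ν) ht
    have h₄ : δ / 2 * t ≤ δ / 2 * sinh t := by gcongr
    linarith
  rw [norm_mul, norm_pow, norm_neg, Real.norm_of_nonneg hsinh0, Real.norm_of_nonneg (exp_pos _).le]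
  calc sinh t ^ k * exp (-x * sinh t - ν * t)
      ≤ k.factorial / (δ / 2) ^ k * exp (δ / 2 * sinh t) * exp (-x * sinh t - ν * t) := by
        gcongr
        exact pow_le_factorial_div_pow_mul_exp (half_pos hδ) hsinh0 k
    _ = k.factorial / (δ / 2) ^ k * exp (δ / 2 * sinh t + (-x * sinh t - ν * t)) := by
        rw [mul_assoc, ← Real.exp_add]
    _ ≤ _ := by gcongr

lemma integrableOn_const_mul_exp_neg_mul (C : ℝ) {a : ℝ} (ha : 0 < a) :
    IntegrableOn (fun t => C * exp (-a * t)) (Ioi 0) :=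
  (exp_neg_integrableOn_Ioi 0 ha).const_mul C

lemma integrableOn_neg_sinh_pow_mul_exp (hx : |ν| < x) (k : ℕ) :
    IntegrableOn (fun t => (-sinh t) ^ k * exp (-x * sinh t - ν * t)) (Ioi 0) := by
  have hδ : 0 < x - |ν| := sub_pos.2 hx
  refine Integrable.mono' (integrableOn_const_mul_exp_neg_mul
    (k.factorial / ((x - |ν|) / 2) ^ k) (half_pos hδ))
    (Continuous.aestronglyMeasurable (by fun_prop)) ?_
  filter_upwards [ae_restrict_mem measurableSet_Ioi] with t ht
  exact norm_neg_sinh_pow_mul_exp_le hδ (by simp) k (le_of_lt ht)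

lemma norm_schlafliDecay_le (hδ : 0 < δ) (hx : |ν| + δ ≤ x) (k : ℕ) :
    ‖schlafliDecay ν k x‖ ≤ k.factorial / (δ / 2) ^ (k + 1) := by
  have hbound := norm_integral_le_of_norm_le
    (integrableOn_const_mul_exp_neg_mul (k.factorial / (δ / 2) ^ k) (half_pos hδ))
    (ae_restrict_of_forall_mem measurableSet_Ioi fun t ht =>
      norm_neg_sinh_pow_mul_exp_le hδ hx k (le_of_lt ht))
  refine hbound.trans_eq ?_
  rw [integral_const_mul, integral_exp_mul_Ioi (by linarith), mul_zero, exp_zero, neg_div_neg_eq,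
    pow_succ, div_mul_div_comm, mul_one]

lemma hasDerivAt_schlafliDecay (hx : |ν| < x) :
    HasDerivAt (schlafliDecay ν k) (schlafliDecay ν (k + 1) x) x := by
  set δ := (x - |ν|) / 2 with hδ
  have hδ0 : 0 < δ := half_pos (sub_pos.2 hx)
  refine (hasDerivAt_integral_of_dominated_loc_of_deriv_le (μ := volume.restrict (Ioi (0 : ℝ)))
    (F := fun x t => (-sinh t) ^ k * exp (-x * sinh t - ν * t))
    (F' := fun x t => (-sinh t) ^ (k + 1) * exp (-x * sinh t - ν * t))
    (Ioi_mem_nhds (by linarith : |ν| + δ < x)) ?_ (integrableOn_neg_sinh_pow_mul_exp hx k)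
    (Continuous.aestronglyMeasurable (by fun_prop)) ?_
    (integrableOn_const_mul_exp_neg_mul ((k + 1).factorial / (δ / 2) ^ (k + 1)) (half_pos hδ0))
    ?_).2
  · exact Eventually.of_forall fun y => Continuous.aestronglyMeasurable (by fun_prop)
  · filter_upwards [ae_restrict_mem measurableSet_Ioi] with t ht y hy
    exact norm_neg_sinh_pow_mul_exp_le hδ0 (le_of_lt hy) (k + 1) (le_of_lt ht)
  · refine Eventually.of_forall fun t y _ => ?_
    have hphase : HasDerivAt (fun y => -y * sinh t - ν * t) (-1 * sinh t) y :=
      ((hasDerivAt_id y).neg.mul_const (sinh t)).sub_const (ν * t)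
    refine (hphase.exp.const_mul ((-sinh t) ^ k)).congr_deriv ?_
    ring

lemma tendsto_neg_sinh_pow_mul_exp (hx : |ν| < x) (k : ℕ) :
    Tendsto (fun t => (-sinh t) ^ k * exp (-x * sinh t - ν * t)) atTop (𝓝 0) := by
  have hδ : 0 < x - |ν| := sub_pos.2 hx
  have hexp : Tendsto (fun t => exp (-((x - |ν|) / 2) * t)) atTop (𝓝 0) :=
    Real.tendsto_exp_atBot.comp (tendsto_id.const_mul_atTop_of_neg (by linarith))
  refine squeeze_zero_norm' ?_
    (by simpa only [mul_zero] using hexp.const_mul (k.factorial / ((x - |ν|) / 2) ^ k))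
  filter_upwards [eventually_ge_atTop 0] with t ht
  exact norm_neg_sinh_pow_mul_exp_le hδ (by simp) k ht

lemma tendsto_mul_cosh_sub_mul_exp (hx : |ν| < x) :
    Tendsto (fun t => (x * cosh t - ν) * exp (-x * sinh t - ν * t)) atTop (𝓝 0) := by
  have hdecay := tendsto_neg_sinh_pow_mul_exp hx
  have hcosh : Tendsto (fun t => x * exp (-t) - ν) atTop (𝓝 (x * 0 - ν)) :=
    (tendsto_exp_neg_atTop_nhds_zero.const_mul x).sub_const ν
  have hsum := (hcosh.mul (hdecay 0)).sub ((hdecay 1).const_mul x)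
  rw [mul_zero, mul_zero, sub_zero] at hsum
  refine hsum.congr fun t => ?_
  rw [← Real.cosh_sub_sinh]
  ring

lemma schlafliDecay_ode (hx : |ν| < x) :
    x ^ 2 * schlafliDecay ν 2 x + x * schlafliDecay ν 1 x + (x ^ 2 - ν ^ 2) * schlafliDecay ν 0 x =
      x - ν := by
  have hprim : ∀ t, HasDerivAt (fun t => -((x * cosh t - ν) * exp (-x * sinh t - ν * t)))
      (x ^ 2 * ((-sinh t) ^ 2 * exp (-x * sinh t - ν * t)) +
        x * ((-sinh t) ^ 1 * exp (-x * sinh t - ν * t)) +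
        (x ^ 2 - ν ^ 2) * ((-sinh t) ^ 0 * exp (-x * sinh t - ν * t))) t := fun t => by
    have hphase : HasDerivAt (fun t => -x * sinh t - ν * t) (-x * cosh t - ν * 1) t :=
      ((Real.hasDerivAt_sinh t).const_mul (-x)).sub ((hasDerivAt_id t).const_mul ν)
    refine ((((Real.hasDerivAt_cosh t).const_mul x).sub_const ν).mul hphase.exp).neg.congr_deriv ?_
    linear_combination x ^ 2 * exp (-x * sinh t - ν * t) * Real.cosh_sq t
  have hterm (c : ℝ) (k : ℕ) :
      IntegrableOn (fun t => c * ((-sinh t) ^ k * exp (-x * sinh t - ν * t))) (Ioi 0) :=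
    (integrableOn_neg_sinh_pow_mul_exp hx k).const_mul c
  have hint := integral_Ioi_of_hasDerivAt_of_tendsto' (a := 0) (fun t _ => hprim t)
    (((hterm _ 2).add (hterm _ 1)).add (hterm _ 0))
    (by simpa only [neg_zero] using (tendsto_mul_cosh_sub_mul_exp hx).neg)
  rw [integral_add (by exact (hterm _ 2).add (hterm _ 1)) (hterm _ 0),
    integral_add (hterm _ 2) (hterm _ 1), integral_const_mul, integral_const_mul,
    integral_const_mul] at hint
  rw [schlafliDecay, schlafliDecay, schlafliDecay, hint]
  simp

end SchlafliIntegrals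

section BesselEquation

/-- The `k`-th derivative of the Bessel function `J_ν` on `x > |ν|`, written through Schläfli's
integrals. -/
noncomputable def besselJDeriv (ν : ℝ) (k : ℕ) (x : ℝ) : ℝ :=
  (1 / π) * schlafliOsc ν k x - (sin (ν * π) / π) * schlafliDecay ν k x

variable {ν x : ℝ} {k : ℕ}

lemma besselJDeriv_zero : besselJDeriv ν 0 = besselJ ν := by
  ext x
  simp [besselJDeriv, besselJ, schlafliOsc, schlafliDecay]

lemma hasDerivAt_besselJDeriv (hx : |ν| < x) :
    HasDerivAt (besselJDeriv ν k) (besselJDeriv ν (k + 1) x) x :=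
  (hasDerivAt_schlafliOsc.const_mul _).sub ((hasDerivAt_schlafliDecay hx).const_mul _)

lemma hasDerivAt_besselJ (hx : |ν| < x) : HasDerivAt (besselJ ν) (besselJDeriv ν 1 x) x :=
  besselJDeriv_zero ▸ hasDerivAt_besselJDeriv hx

theorem bessel_ode (hx : |ν| < x) :
    x ^ 2 * besselJDeriv ν 2 x + x * besselJDeriv ν 1 x + (x ^ 2 - ν ^ 2) * besselJ ν x = 0 := by
  rw [← besselJDeriv_zero, besselJDeriv, besselJDeriv, besselJDeriv]
  linear_combination
    (1 / π) * schlafliOsc_ode ν x - (sin (ν * π) / π) * schlafliDecay_ode hx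

end BesselEquation

section AsymptoticsAtInfinity

variable {ν : ℝ} {k : ℕ}

lemma integral_eq_integral_reflect_add {g : ℝ → ℝ} (hg : Continuous g) :
    ∫ θ in 0..π, g θ = ∫ t in 0..(π / 2), (g (π / 2 - t) + g (π / 2 + t)) := by
  rw [intervalIntegral.integral_add (Continuous.intervalIntegrable (by fun_prop) _ _)
      (Continuous.intervalIntegrable (by fun_prop) _ _),
    intervalIntegral.integral_comp_sub_left g, intervalIntegral.integral_comp_add_left g,
    sub_self, sub_zero, add_zero, add_halves]
  exact (intervalIntegral.integral_add_adjacent_intervals (hg.intervalIntegrable _ _)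
    (hg.intervalIntegrable _ _)).symm

/-- Recentring at the stationary point `θ = π / 2` of the phase `x sin θ`. -/
lemma schlafliOsc_eq_re (ν : ℝ) (k : ℕ) (x : ℝ) :
    schlafliOsc ν k x = 2 * (Complex.exp ((k * (π / 2) - ν * π / 2 : ℝ) * I) *
      ∫ t in 0..(π / 2), Complex.exp ((x * cos t : ℝ) * I) * (cos t ^ k * cos (ν * t) : ℝ)).re := by
  have hre := Complex.reCLM.intervalIntegral_comp_comm (μ := volume) (a := 0) (b := π / 2)
    (f := fun t : ℝ => Complex.exp ((k * (π / 2) - ν * π / 2 : ℝ) * I) *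
      (Complex.exp ((x * cos t : ℝ) * I) * (cos t ^ k * cos (ν * t) : ℝ)))
    (Continuous.intervalIntegrable (by fun_prop) _ _)
  simp only [Complex.reCLM_apply] at hre
  rw [schlafliOsc, integral_eq_integral_reflect_add (by fun_prop),
    ← intervalIntegral.integral_const_mul, ← hre, ← intervalIntegral.integral_const_mul]
  refine intervalIntegral.integral_congr fun t _ => ?_
  rw [← mul_assoc, ← Complex.exp_add, ← add_mul, ← Complex.ofReal_add, Complex.re_mul_ofReal,
    Complex.exp_ofReal_mul_I_re, sin_pi_div_two_sub, add_comm (π / 2) t, sin_add_pi_div_two]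
  set φ := k * (π / 2) - ν * π / 2 + x * cos t with hφ
  rw [show x * cos t - ν * (π / 2 - t) + k * (π / 2) = φ + ν * t by rw [hφ]; ring,
    show x * cos t - ν * (t + π / 2) + k * (π / 2) = φ - ν * t by rw [hφ]; ring,
    cos_add φ, cos_sub φ]
  ring

lemma tendsto_sqrt_mul_schlafliOsc :
    Tendsto (fun x => √x * schlafliOsc ν k x -
      2 * √(π / 2) * cos (x - ν * π / 2 - π / 4 + k * (π / 2))) atTop (𝓝 0) := by
  have hf : ContDiff ℝ 2 fun t : ℝ => ((cos t ^ k * cos (ν * t) : ℝ) : ℂ) :=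
    Complex.ofRealCLM.contDiff.comp
      ((contDiff_cos.pow k).mul (contDiff_cos.comp (contDiff_const.mul contDiff_id)))
  have hlim := (Complex.continuous_re.tendsto _).comp ((tendsto_sqrt_mul_integral_exp_cos_mul
    hf).const_mul (2 * Complex.exp ((k * (π / 2) - ν * π / 2 : ℝ) * I)))
  simp only [mul_zero, Complex.zero_re, cos_zero, one_pow, mul_one, Complex.ofReal_one] at hlim
  refine hlim.congr fun x => ?_
  have hexp : Complex.exp ((x - ν * π / 2 - π / 4 + k * (π / 2) : ℝ) * I) =
      Complex.exp ((k * (π / 2) - ν * π / 2 : ℝ) * I) * Complex.exp ((x - π / 4 : ℝ) * I) := by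
    rw [← Complex.exp_add, ← add_mul, ← Complex.ofReal_add]
    ring_nf
  rw [schlafliOsc_eq_re, ← Complex.exp_ofReal_mul_I_re, ← mul_assoc, mul_comm √x 2,
    ← Complex.re_ofReal_mul, ← Complex.re_ofReal_mul, ← Complex.sub_re, hexp, Function.comp_apply]
  congr 1
  push_cast
  ring

lemma tendsto_sqrt_mul_schlafliDecay :
    Tendsto (fun x => √x * schlafliDecay ν k x) atTop (𝓝 0) := by
  have hbound : Tendsto (fun x : ℝ => 4 * k.factorial * (4 / x) ^ k * (1 / √x)) atTop (𝓝 0) := by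
    simpa only [mul_zero, id] using
      (((tendsto_const_nhds.div_atTop tendsto_id).pow k).const_mul _).mul
        (tendsto_const_nhds.div_atTop tendsto_sqrt_atTop)
  refine squeeze_zero_norm' ?_ hbound
  filter_upwards [eventually_gt_atTop 0, eventually_ge_atTop (2 * |ν|)] with x hx hνx
  rw [norm_mul, Real.norm_of_nonneg (Real.sqrt_nonneg x)]
  calc √x * ‖schlafliDecay ν k x‖ ≤ √x * (k.factorial / (x / 2 / 2) ^ (k + 1)) := by
        gcongr
        exact norm_schlafliDecay_le (half_pos hx) (by linarith) k
    _ = 4 * k.factorial * (4 / x) ^ k * (√x / x) := by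
        rw [div_div, pow_succ, ← inv_div x 4, inv_pow]
        norm_num
        field_simp
    _ = _ := by rw [Real.sqrt_div_self']

lemma sqrt_two_div_pi : √(2 / π) = 1 / π * (2 * √(π / 2)) := by
  rw [← inv_div π 2, Real.sqrt_inv, ← one_div, ← Real.sqrt_div_self']
  ring

theorem tendsto_sqrt_mul_besselJDeriv :
    Tendsto (fun x => √x * besselJDeriv ν k x -
      √(2 / π) * cos (x - ν * π / 2 - π / 4 + k * (π / 2))) atTop (𝓝 0) := by
  have hlim := ((tendsto_sqrt_mul_schlafliOsc (ν := ν) (k := k)).const_mul (1 / π)).sub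
    ((tendsto_sqrt_mul_schlafliDecay (ν := ν) (k := k)).const_mul (sin (ν * π) / π))
  rw [mul_zero, mul_zero, sub_zero] at hlim
  refine hlim.congr fun x => ?_
  rw [besselJDeriv, sqrt_two_div_pi]
  ring

end AsymptoticsAtInfinity

section LiouvilleGreen

/-- The Liouville–Green phase `ω` of Bessel's equation, normalised to vanish at the turning point
`x = ν`. -/
noncomputable def lgPhase (ν x : ℝ) : ℝ := π * (x * gfun (ν / x))

/-- The reciprocal `q` of the Liouville–Green amplitude of Bessel's equation: `q · J_ν` oscillates
with constant amplitude. -/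
noncomputable def lgScale (ν x : ℝ) : ℝ := (x ^ 2 - ν ^ 2) ^ ((1 : ℝ) / 4)

/-- The derivative of `q · J_ν` with respect to the phase `ω`. -/
noncomputable def lgSlope (ν x : ℝ) : ℝ :=
  x / lgScale ν x * besselJDeriv ν 1 x + x ^ 2 / (2 * lgScale ν x ^ 5) * besselJ ν x

/-- The defect `R` in the oscillator equation: `u = q · J_ν` satisfies
`d²u/dω² = -u + (dx/dω) R u`. -/
noncomputable def lgDefect (ν x : ℝ) : ℝ :=
  x / lgScale ν x ^ 6 - 5 * x ^ 3 / (4 * lgScale ν x ^ 10)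

/-- The complex envelope `(u - i du/dω) e^{-iω}` of `u = q · J_ν`, which would be constant if
`u` were an exact solution of `d²u/dω² = -u`. -/
noncomputable def lgEnvelope (ν x : ℝ) : ℂ :=
  ((lgScale ν x * besselJ ν x : ℝ) - lgSlope ν x * I) * Complex.exp (-lgPhase ν x * I)

variable {ν x : ℝ}

lemma sq_sub_sq_pos (hx : |ν| < x) : 0 < x ^ 2 - ν ^ 2 :=
  sub_pos.2 (sq_lt_sq.2 (hx.trans_le (le_abs_self x)))

lemma lgScale_pos (hx : |ν| < x) : 0 < lgScale ν x :=
  Real.rpow_pos_of_pos (sq_sub_sq_pos hx) _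

lemma lgScale_pow_four (hx : |ν| < x) : lgScale ν x ^ 4 = x ^ 2 - ν ^ 2 := by
  rw [lgScale, ← Real.rpow_natCast, ← Real.rpow_mul (sq_sub_sq_pos hx).le]
  norm_num

lemma lgScale_sq (hx : |ν| < x) : lgScale ν x ^ 2 = √(x ^ 2 - ν ^ 2) := by
  rw [← lgScale_pow_four hx, show lgScale ν x ^ 4 = (lgScale ν x ^ 2) ^ 2 by ring,
    Real.sqrt_sq (sq_nonneg _)]

lemma lgPhase_eq (hx : 0 < x) : lgPhase ν x = √(x ^ 2 - ν ^ 2) - ν * arccos (ν / x) := by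
  have hsqrt : √(x ^ 2 - ν ^ 2) = x * √(1 - (ν / x) ^ 2) := by
    rw [show x ^ 2 - ν ^ 2 = x ^ 2 * (1 - (ν / x) ^ 2) by field_simp,
      Real.sqrt_mul (sq_nonneg x), Real.sqrt_sq hx.le]
  rw [hsqrt, lgPhase, gfun]
  field_simp

lemma hasDerivAt_sq_sub_sq (ν x : ℝ) : HasDerivAt (fun x => x ^ 2 - ν ^ 2) (2 * x) x := by
  simpa using (hasDerivAt_pow 2 x).sub_const (ν ^ 2)

lemma hasDerivAt_lgScale (hx : |ν| < x) :
    HasDerivAt (lgScale ν) (x / (2 * lgScale ν x ^ 3)) x := by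
  have hpos := sq_sub_sq_pos hx
  have hq := lgScale_pos hx
  refine ((hasDerivAt_sq_sub_sq ν x).rpow_const (p := 1 / 4) (Or.inl hpos.ne')).congr_deriv ?_
  rw [Real.rpow_sub hpos, Real.rpow_one, ← lgScale, ← lgScale_pow_four hx]
  field_simp
  ring

lemma hasDerivAt_lgPhase (hx : |ν| < x) : HasDerivAt (lgPhase ν) (lgScale ν x ^ 2 / x) x := by
  have hx0 : 0 < x := (abs_nonneg ν).trans_lt hx
  have hpos := sq_sub_sq_pos hx
  have hq := lgScale_pos hx
  have hratio : |ν / x| < 1 := by rwa [abs_div, abs_of_pos hx0, div_lt_one hx0]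
  have hdiv : HasDerivAt (fun x : ℝ => ν / x) (ν * -(x ^ 2)⁻¹) x :=
    (hasDerivAt_inv hx0.ne').const_mul ν
  have harccos :=
    (Real.hasDerivAt_arccos (abs_lt.1 hratio).1.ne' (abs_lt.1 hratio).2.ne).comp x hdiv
  have heq : lgPhase ν =ᶠ[𝓝 x] fun x => √(x ^ 2 - ν ^ 2) - ν * arccos (ν / x) := by
    filter_upwards [Ioi_mem_nhds hx0] with y hy
    exact lgPhase_eq hy
  refine HasDerivAt.congr_of_eventuallyEq ?_ heq
  refine (((hasDerivAt_sq_sub_sq ν x).sqrt hpos.ne').sub (harccos.const_mul ν)).congr_deriv ?_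
  have hsqrt : √(1 - (ν / x) ^ 2) = lgScale ν x ^ 2 / x := by
    rw [lgScale_sq hx, show 1 - (ν / x) ^ 2 = (x ^ 2 - ν ^ 2) / x ^ 2 by field_simp,
      Real.sqrt_div hpos.le, Real.sqrt_sq hx0.le]
  rw [hsqrt, ← lgScale_sq hx]
  field_simp
  linear_combination -lgScale_pow_four hx

lemma hasDerivAt_lgScale_mul_besselJ (hx : |ν| < x) :
    HasDerivAt (fun x => lgScale ν x * besselJ ν x) (lgScale ν x ^ 2 / x * lgSlope ν x) x := by
  have hx0 : 0 < x := (abs_nonneg ν).trans_lt hx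
  have hq := lgScale_pos hx
  refine ((hasDerivAt_lgScale hx).mul (hasDerivAt_besselJ hx)).congr_deriv ?_
  rw [lgSlope]
  field_simp
  ring

lemma hasDerivAt_lgSlope (hx : |ν| < x) :
    HasDerivAt (lgSlope ν)
      ((lgDefect ν x - lgScale ν x ^ 2 / x) * (lgScale ν x * besselJ ν x)) x := by
  have hx0 : 0 < x := (abs_nonneg ν).trans_lt hx
  have hq := lgScale_pos hx
  have hq' := hasDerivAt_lgScale hx
  have hfirst := ((hasDerivAt_id x).div hq' hq.ne').mul (hasDerivAt_besselJDeriv (k := 1) hx)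
  have hsecond := ((hasDerivAt_pow 2 x).div ((hq'.pow 5).const_mul 2)
    (mul_pos two_pos (pow_pos hq 5)).ne').mul (hasDerivAt_besselJ hx)
  refine (hfirst.add hsecond).congr_deriv ?_
  have hode := bessel_ode hx
  rw [← lgScale_pow_four hx] at hode
  have hJ'' : besselJDeriv ν 2 x =
      -(x * besselJDeriv ν 1 x + lgScale ν x ^ 4 * besselJ ν x) / x ^ 2 := by
    field_simp
    linear_combination hode
  rw [hJ'', lgDefect]
  simp only [Pi.div_apply, Pi.pow_apply, id]
  field_simp
  push_cast
  ring

theorem hasDerivAt_lgEnvelope (hx : |ν| < x) :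
    HasDerivAt (lgEnvelope ν)
      (-I * (lgDefect ν x * (lgScale ν x * besselJ ν x) : ℝ) *
        Complex.exp (-lgPhase ν x * I)) x := by
  refine (((hasDerivAt_lgScale_mul_besselJ hx).ofReal_comp.sub
    ((hasDerivAt_lgSlope hx).ofReal_comp.mul_const I)).mul
    ((hasDerivAt_lgPhase hx).ofReal_comp.neg.mul_const I).cexp).congr_deriv ?_
  simp only [Pi.sub_apply, Pi.neg_apply]
  push_cast
  linear_combination (lgScale ν x ^ 2 / x * lgSlope ν x : ℂ) *
    Complex.exp (-lgPhase ν x * I) * Complex.I_sq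

lemma lgEnvelope_mul_exp (ν x : ℝ) :
    lgEnvelope ν x * Complex.exp (lgPhase ν x * I) =
      (lgScale ν x * besselJ ν x : ℝ) - lgSlope ν x * I := by
  rw [lgEnvelope, mul_assoc, ← Complex.exp_add, ← add_mul, neg_add_cancel, zero_mul,
    Complex.exp_zero, mul_one]

lemma lgScale_mul_besselJ_eq_re (ν x : ℝ) :
    lgScale ν x * besselJ ν x = (lgEnvelope ν x * Complex.exp (lgPhase ν x * I)).re := by
  rw [lgEnvelope_mul_exp]
  simp

lemma abs_lgScale_mul_besselJ_le (ν x : ℝ) : |lgScale ν x * besselJ ν x| ≤ ‖lgEnvelope ν x‖ := by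
  rw [lgScale_mul_besselJ_eq_re]
  refine (Complex.abs_re_le_norm _).trans_eq ?_
  rw [norm_mul, Complex.norm_exp_ofReal_mul_I, mul_one]

lemma abs_lt_of_mul_sq_le_sq_sub_sq {m : ℝ} (hm : 0 < m) (hx : 0 < x)
    (hν : m ^ 2 * x ^ 2 ≤ x ^ 2 - ν ^ 2) : |ν| < x :=
  abs_lt_of_sq_lt_sq (sub_pos.1 ((by positivity : 0 < m ^ 2 * x ^ 2).trans_le hν)) hx.le

lemma abs_lgDefect_le {m : ℝ} (hm : 0 < m) (hx : 0 < x) (hν : m ^ 2 * x ^ 2 ≤ x ^ 2 - ν ^ 2) :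
    |lgDefect ν x| ≤ (1 / m ^ 3 + 5 / (4 * m ^ 5)) / x ^ 2 := by
  have hνx := abs_lt_of_mul_sq_le_sq_sub_sq hm hx hν
  have hq := lgScale_pos hνx
  have hle : m * x ≤ lgScale ν x ^ 2 := by
    rw [lgScale_sq hνx]
    exact Real.le_sqrt_of_sq_le (by rwa [mul_pow])
  have hfirst : |x / lgScale ν x ^ 6| ≤ 1 / m ^ 3 / x ^ 2 := by
    rw [abs_of_pos (by positivity)]
    calc x / lgScale ν x ^ 6 = x / (lgScale ν x ^ 2) ^ 3 := by ring
      _ ≤ x / (m * x) ^ 3 := by gcongr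
      _ = _ := by field_simp
  have hsecond : |5 * x ^ 3 / (4 * lgScale ν x ^ 10)| ≤ 5 / (4 * m ^ 5) / x ^ 2 := by
    rw [abs_of_pos (by positivity)]
    calc 5 * x ^ 3 / (4 * lgScale ν x ^ 10) = 5 * x ^ 3 / (4 * (lgScale ν x ^ 2) ^ 5) := by ring
      _ ≤ 5 * x ^ 3 / (4 * (m * x) ^ 5) := by gcongr
      _ = _ := by field_simp
  rw [lgDefect, add_div]
  exact (abs_sub _ _).trans (add_le_add hfirst hsecond)

lemma tendsto_mul_sub_mul_of_tendsto_sub {α : Type*} {l : Filter α} {r f g : α → ℝ} {a C : ℝ}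
    (hr : Tendsto r l (𝓝 a)) (hfg : Tendsto (fun y => f y - g y) l (𝓝 0))
    (hg : ∀ y, |g y| ≤ C) : Tendsto (fun y => r y * f y - a * g y) l (𝓝 0) := by
  have hg' : IsBoundedUnder (· ≤ ·) l (norm ∘ g) := isBoundedUnder_of ⟨C, hg⟩
  have hra : Tendsto (fun y => r y - a) l (𝓝 0) := by simpa using hr.sub_const a
  have hsum := (hr.mul hfg).add (hra.zero_mul_isBoundedUnder_le hg')
  rw [mul_zero, add_zero] at hsum
  exact hsum.congr fun y => by ring

lemma tendsto_lgScale_div_sqrt (ν : ℝ) : Tendsto (fun x => lgScale ν x / √x) atTop (𝓝 1) := by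
  have hratio : Tendsto (fun x => ν / x) atTop (𝓝 0) := tendsto_const_nhds.div_atTop tendsto_id
  have hlim := ((hratio.pow 2).const_sub 1).rpow_const (p := (1 : ℝ) / 4) (Or.inr (by norm_num))
  norm_num at hlim
  refine hlim.congr' ?_
  filter_upwards [eventually_gt_atTop |ν|] with x hx
  have hx0 : 0 < x := (abs_nonneg ν).trans_lt hx
  have hsqrt : (x ^ 2) ^ ((1 : ℝ) / 4) = √x := by
    rw [Real.sqrt_eq_rpow, ← Real.rpow_natCast, ← Real.rpow_mul hx0.le]
    norm_num
  rw [lgScale, ← hsqrt, ← Real.div_rpow (sq_sub_sq_pos hx).le (sq_nonneg x)]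
  congr 1
  field_simp

lemma tendsto_sqrt_sq_sub_sq_sub_self (ν : ℝ) :
    Tendsto (fun x => √(x ^ 2 - ν ^ 2) - x) atTop (𝓝 0) := by
  refine squeeze_zero_norm' ?_
    (tendsto_const_nhds.div_atTop tendsto_id : Tendsto (fun x => ν ^ 2 / x) atTop (𝓝 0))
  filter_upwards [eventually_gt_atTop |ν|] with x hx
  have hx0 : 0 < x := (abs_nonneg ν).trans_lt hx
  have hsq := Real.sq_sqrt (sq_sub_sq_pos hx).le
  have hle : √(x ^ 2 - ν ^ 2) ≤ x := Real.sqrt_le_iff.2 ⟨hx0.le, sub_le_self _ (sq_nonneg ν)⟩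
  rw [Real.norm_eq_abs, abs_of_nonpos (by linarith), le_div_iff₀ hx0]
  nlinarith [Real.sqrt_nonneg (x ^ 2 - ν ^ 2)]

lemma tendsto_lgPhase_sub (ν : ℝ) :
    Tendsto (fun x => lgPhase ν x - (x - ν * π / 2)) atTop (𝓝 0) := by
  have harccos : Tendsto (fun x => arccos (ν / x)) atTop (𝓝 (arccos 0)) :=
    (Real.continuous_arccos.tendsto 0).comp (tendsto_const_nhds.div_atTop tendsto_id)
  have hlim := (tendsto_sqrt_sq_sub_sq_sub_self ν).sub ((harccos.sub_const (π / 2)).const_mul ν)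
  rw [arccos_zero, sub_self, mul_zero, sub_zero] at hlim
  refine hlim.congr' ?_
  filter_upwards [eventually_gt_atTop 0] with x hx
  rw [lgPhase_eq hx]
  ring

lemma abs_mul_cos_le {a : ℝ} (ha : 0 ≤ a) (θ : ℝ) : |a * cos θ| ≤ a := by
  rw [abs_mul, abs_of_nonneg ha]
  exact mul_le_of_le_one_right ha (abs_cos_le_one θ)

lemma tendsto_lgScale_mul_besselJ (ν : ℝ) :
    Tendsto (fun x => lgScale ν x * besselJ ν x - √(2 / π) * cos (x - ν * π / 2 - π / 4))
      atTop (𝓝 0) := by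
  have hlim := tendsto_mul_sub_mul_of_tendsto_sub (tendsto_lgScale_div_sqrt ν)
    (tendsto_sqrt_mul_besselJDeriv (ν := ν) (k := 0))
    fun _ => abs_mul_cos_le (Real.sqrt_nonneg _) _
  refine hlim.congr' ?_
  filter_upwards [eventually_gt_atTop 0] with x hx
  have hsqrt : √x ≠ 0 := (Real.sqrt_pos.2 hx).ne'
  rw [besselJDeriv_zero, Nat.cast_zero, zero_mul, add_zero, one_mul, ← mul_assoc,
    div_mul_cancel₀ _ hsqrt]

lemma tendsto_lgSlope (ν : ℝ) :
    Tendsto (fun x => lgSlope ν x + √(2 / π) * sin (x - ν * π / 2 - π / 4)) atTop (𝓝 0) := by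
  have hinv : Tendsto (fun x => (lgScale ν x / √x)⁻¹) atTop (𝓝 1) := by
    simpa using (tendsto_lgScale_div_sqrt ν).inv₀ one_ne_zero
  have hsmall : Tendsto (fun x => (lgScale ν x / √x)⁻¹ ^ 5 * (1 / 2 / x)) atTop (𝓝 0) := by
    simpa using (hinv.pow 5).mul (tendsto_const_nhds.div_atTop tendsto_id)
  have hJ (k : ℕ) {r : ℝ → ℝ} {a : ℝ} (hr : Tendsto r atTop (𝓝 a)) :=
    tendsto_mul_sub_mul_of_tendsto_sub hr (tendsto_sqrt_mul_besselJDeriv (ν := ν) (k := k))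
      fun _ => abs_mul_cos_le (Real.sqrt_nonneg _) _
  have hlim := (hJ 1 hinv).add (hJ 0 hsmall)
  rw [add_zero] at hlim
  refine hlim.congr' ?_
  filter_upwards [eventually_gt_atTop |ν|] with x hx
  have hx0 : 0 < x := (abs_nonneg ν).trans_lt hx
  have hq := lgScale_pos hx
  have hsq := Real.sq_sqrt hx0.le
  have hfirst : (lgScale ν x / √x)⁻¹ * √x = x / lgScale ν x := by
    rw [inv_div, div_mul_eq_mul_div, ← sq, hsq]
  have hsecond : (lgScale ν x / √x)⁻¹ ^ 5 * (1 / 2 / x) * √x = x ^ 2 / (2 * lgScale ν x ^ 5) := by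
    rw [inv_div, div_pow]
    field_simp
    linear_combination (√x ^ 4 + √x ^ 2 * x + x ^ 2) * hsq
  rw [lgSlope, ← hfirst, ← hsecond, besselJDeriv_zero, Nat.cast_one, one_mul, one_mul,
    cos_add_pi_div_two]
  ring

lemma tendsto_lgScale_mul_besselJ_sub_lgSlope_mul_I (ν : ℝ) :
    Tendsto (fun x => (lgScale ν x * besselJ ν x : ℝ) - lgSlope ν x * I -
      √(2 / π) * Complex.exp ((x - ν * π / 2 - π / 4 : ℝ) * I)) atTop (𝓝 0) := by
  have hre := (Complex.continuous_ofReal.tendsto 0).comp (tendsto_lgScale_mul_besselJ ν)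
  have him := (Complex.continuous_ofReal.tendsto 0).comp (tendsto_lgSlope ν)
  have hlim := hre.sub (him.mul_const I)
  rw [Complex.ofReal_zero, zero_mul, sub_zero] at hlim
  refine hlim.congr fun x => ?_
  rw [Complex.exp_mul_I]
  simp only [Function.comp_apply]
  push_cast
  ring

theorem tendsto_lgEnvelope (ν : ℝ) :
    Tendsto (lgEnvelope ν) atTop (𝓝 (√(2 / π) * Complex.exp (-(π / 4) * I))) := by
  have hunit : IsBoundedUnder (· ≤ ·) atTop (norm ∘ fun x => Complex.exp (-lgPhase ν x * I)) :=
    isBoundedUnder_of ⟨1, fun x => by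
      rw [Function.comp_apply, ← Complex.ofReal_neg, Complex.norm_exp_ofReal_mul_I]⟩
  have hphase : Tendsto (fun x => (√(2 / π) : ℂ) *
      Complex.exp (-((lgPhase ν x - (x - ν * π / 2) : ℝ) + π / 4) * I)) atTop
      (𝓝 (√(2 / π) * Complex.exp (-((0 : ℝ) + π / 4) * I))) := by
    have hcont : Continuous fun s : ℝ => (√(2 / π) : ℂ) * Complex.exp (-(s + π / 4) * I) := by
      fun_prop
    exact (hcont.tendsto 0).comp (tendsto_lgPhase_sub ν)
  have hlim := ((tendsto_lgScale_mul_besselJ_sub_lgSlope_mul_I ν).zero_mul_isBoundedUnder_le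
    hunit).add hphase
  rw [Complex.ofReal_zero, zero_add, zero_add] at hlim
  refine hlim.congr fun x => ?_
  have hexp : Complex.exp (-((lgPhase ν x - (x - ν * π / 2) : ℝ) + π / 4) * I) =
      Complex.exp ((x - ν * π / 2 - π / 4 : ℝ) * I) * Complex.exp (-lgPhase ν x * I) := by
    rw [← Complex.exp_add]
    push_cast
    ring_nf
  rw [hexp, lgEnvelope]
  ring

end LiouvilleGreen

section BesselAsymptotics

variable {ν x m : ℝ}

lemma sqrt_pi_div_two_mul_sqrt_two_div_pi : √(π / 2) * √(2 / π) = 1 := by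
  rw [← inv_div π 2, Real.sqrt_inv, mul_inv_cancel₀ (Real.sqrt_pos.2 pi_div_two_pos).ne']

lemma sqrt_mul_lgScale_mul_besselJ_sub_sin (ν x : ℝ) :
    √(π / 2) * lgScale ν x * besselJ ν x - sin (lgPhase ν x + π / 4) =
      √(π / 2) * ((lgEnvelope ν x - √(2 / π) * Complex.exp (-(π / 4) * I)) *
        Complex.exp (lgPhase ν x * I)).re := by
  have hsin : √(π / 2) * (√(2 / π) * Complex.exp (-(π / 4) * I) *
      Complex.exp (lgPhase ν x * I)).re = sin (lgPhase ν x + π / 4) := by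
    rw [mul_assoc, ← Complex.exp_add, ← add_mul, Complex.re_ofReal_mul, ← mul_assoc,
      sqrt_pi_div_two_mul_sqrt_two_div_pi, one_mul,
      show -(π / 4 : ℂ) + lgPhase ν x = (lgPhase ν x + π / 4 - π / 2 : ℝ) by push_cast; ring,
      Complex.exp_ofReal_mul_I_re, cos_sub_pi_div_two]
  rw [sub_mul, Complex.sub_re, ← lgScale_mul_besselJ_eq_re, mul_sub, hsin, mul_assoc]

lemma norm_lgEnvelope_sub_le (hm : 0 < m) (hx : 0 < x) (hν : m ^ 2 * x ^ 2 ≤ x ^ 2 - ν ^ 2) :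
    ‖lgEnvelope ν x - √(2 / π) * Complex.exp (-(π / 4) * I)‖ ≤
      √(2 / π) * (exp ((1 / m ^ 3 + 5 / (4 * m ^ 5)) / x) - 1) := by
  have hm1 : m ^ 2 ≤ 1 := le_of_mul_le_mul_right (by linarith [sq_nonneg ν]) (pow_pos hx 2)
  have hνy : ∀ y ≥ x, m ^ 2 * y ^ 2 ≤ y ^ 2 - ν ^ 2 := fun y hy => by
    have : (1 - m ^ 2) * x ^ 2 ≤ (1 - m ^ 2) * y ^ 2 := by gcongr
    linarith
  have hderiv_le : ∀ y ≥ x, ‖-I * (lgDefect ν y * (lgScale ν y * besselJ ν y) : ℝ) *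
      Complex.exp (-lgPhase ν y * I)‖ ≤
      (1 / m ^ 3 + 5 / (4 * m ^ 5)) / y ^ 2 * ‖lgEnvelope ν y‖ := fun y hy => by
    rw [norm_mul, norm_mul, norm_neg, Complex.norm_I, one_mul, ← Complex.ofReal_neg,
      Complex.norm_exp_ofReal_mul_I, mul_one, Complex.norm_real, norm_mul]
    exact mul_le_mul (abs_lgDefect_le hm (hx.trans_le hy) (hνy y hy))
      (abs_lgScale_mul_besselJ_le ν y) (norm_nonneg _) (by positivity)
  have hbound := norm_sub_le_of_norm_deriv_le_div_sq_of_tendsto (by positivity) hx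
    (fun y hy => hasDerivAt_lgEnvelope
      (abs_lt_of_mul_sq_le_sq_sub_sq hm (hx.trans_le hy) (hνy y hy)))
    hderiv_le (tendsto_lgEnvelope ν)
  have hnorm : ‖(√(2 / π) : ℂ) * Complex.exp (-(π / 4) * I)‖ = √(2 / π) := by
    rw [norm_mul, Complex.norm_real, Real.norm_of_nonneg (Real.sqrt_nonneg _),
      show -(π / 4 : ℂ) = (-(π / 4) : ℝ) by push_cast; rfl, Complex.norm_exp_ofReal_mul_I, mul_one]
  rwa [hnorm] at hbound

theorem abs_sqrt_mul_lgScale_mul_besselJ_sub_sin_le (hm : 0 < m) (hx : 0 < x)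
    (hν : m ^ 2 * x ^ 2 ≤ x ^ 2 - ν ^ 2) :
    |√(π / 2) * lgScale ν x * besselJ ν x - sin (lgPhase ν x + π / 4)| ≤
      exp ((1 / m ^ 3 + 5 / (4 * m ^ 5)) / x) - 1 := by
  set w := (√(2 / π) : ℂ) * Complex.exp (-(π / 4) * I)
  calc _ = √(π / 2) * |((lgEnvelope ν x - w) * Complex.exp (lgPhase ν x * I)).re| := by
        rw [sqrt_mul_lgScale_mul_besselJ_sub_sin, abs_mul, abs_of_nonneg (Real.sqrt_nonneg _)]
    _ ≤ √(π / 2) * ‖(lgEnvelope ν x - w) * Complex.exp (lgPhase ν x * I)‖ := by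
        gcongr
        exact Complex.abs_re_le_norm _
    _ = √(π / 2) * ‖lgEnvelope ν x - w‖ := by
        rw [norm_mul, Complex.norm_exp_ofReal_mul_I, mul_one]
    _ ≤ √(π / 2) * (√(2 / π) * (exp ((1 / m ^ 3 + 5 / (4 * m ^ 5)) / x) - 1)) := by
        gcongr
        exact norm_lgEnvelope_sub_le hm hx hν
    _ = _ := by rw [← mul_assoc, sqrt_pi_div_two_mul_sqrt_two_div_pi, one_mul]

lemma exp_div_sub_one_le {K x₀ : ℝ} (hK : 0 ≤ K) (hx₀ : 0 < x₀) (hx : x₀ ≤ x) :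
    exp (K / x) - 1 ≤ K * exp (K / x₀) / x := by
  have hx' : 0 < x := hx₀.trans_le hx
  calc exp (K / x) - 1 = exp (K / x) * (1 - exp (-(K / x))) := by
        rw [mul_sub, ← Real.exp_add, add_neg_cancel, Real.exp_zero, mul_one]
    _ ≤ exp (K / x) * (K / x) := by
        gcongr
        linarith [Real.one_sub_le_exp_neg (K / x)]
    _ ≤ exp (K / x₀) * (K / x) := by gcongr
    _ = _ := by ring

theorem besselJ_asymptotics_away_general (c x₀ : ℝ) (hc : 0 < c) (hx₀ : 0 < x₀) :
    ∃ C : ℝ, 0 < C ∧ ∀ ν x : ℝ, (1 + c) * |ν| ≤ x → x₀ ≤ x →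
      |Real.sqrt (π / 2) * (x ^ 2 - ν ^ 2) ^ ((1 : ℝ) / 4) * besselJ ν x -
          Real.sin (π * (x * gfun (ν / x)) + π / 4)| ≤ C / x := by
  have hm : 0 < 1 - (1 / (1 + c)) ^ 2 :=
    sub_pos.2 (pow_lt_one₀ (by positivity) ((div_lt_one (by positivity)).2 (by linarith))
      two_ne_zero)
  set m := √(1 - (1 / (1 + c)) ^ 2)
  have hm0 : 0 < m := Real.sqrt_pos.2 hm
  set K := 1 / m ^ 3 + 5 / (4 * m ^ 5)
  refine ⟨K * exp (K / x₀), by positivity, fun ν x hνx hx₀x => ?_⟩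
  have hν : ν ^ 2 ≤ (1 / (1 + c) * x) ^ 2 := by
    rw [← sq_abs ν, one_div_mul_eq_div]
    gcongr
    rwa [le_div_iff₀' (by positivity)]
  refine (abs_sqrt_mul_lgScale_mul_besselJ_sub_sin_le hm0 (hx₀.trans_le hx₀x) ?_).trans
    (exp_div_sub_one_le (by positivity) hx₀ hx₀x)
  rw [Real.sq_sqrt hm.le]
  linarith

end BesselAsymptotics

/-- asymptotics of `J_ν(x)` in the oscillatory regime `x ≥ max((1+c)ν, 2)`. -/
theorem besselJ_asymptotics_away (c : ℝ) (hc : 0 < c) :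
    ∃ C : ℝ, 0 < C ∧ ∀ ν x : ℝ, 0 ≤ ν → max ((1 + c) * ν) 2 ≤ x →
      |Real.sqrt (π / 2) * (x ^ 2 - ν ^ 2) ^ ((1 : ℝ) / 4) * besselJ ν x -
          Real.sin (π * (x * gfun (ν / x)) + π / 4)| ≤ C / x := by
  obtain ⟨C, hC, hbound⟩ := besselJ_asymptotics_away_general c 2 hc two_pos
  exact ⟨C, hC, fun ν x hν hx =>
    hbound ν x (by rw [abs_of_nonneg hν]; exact (max_le_iff.1 hx).1) (max_le_iff.1 hx).2⟩
end

section
/- There exists a constant C > 0 such that for all ν ≥ 0 and x > 0 with x + ν ≥ 2, | ∫₀^∞ e^{−x sinh t − ν t} dt − 1/(x+ν) | ≤ C/(x+ν)³. -/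
open Real MeasureTheory Set

/-!
Write `φ t = x sinh t + ν t` and `s = x + ν = φ' 0`. Since `s t ≤ φ t`, the integral of `exp (-φ)`
is at most `1 / s`. For the lower bound, `(1 - t² / 2) cosh t ≤ 1` gives `(1 - t² / 2) φ' t ≤ s`,
hence
`d/dt [(t² / 2 - 1) exp (-φ t)] = ((1 - t² / 2) φ' t + t) exp (-φ t) ≤ s exp (-φ t) + t exp (-s t)`.
Integrating over `(0, ∞)` yields `1 ≤ s ∫ exp (-φ) + 1 / s²`.
-/

open Filter Topology

lemma sub_le_integral_Ioi_of_hasDeriv_right_of_le {f f' g : ℝ → ℝ} {a m : ℝ}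
    (hcont : ContinuousOn f (Ici a))
    (hderiv : ∀ t ∈ Ioi a, HasDerivWithinAt f (f' t) (Ioi t) t)
    (hg : IntegrableOn g (Ioi a)) (hle : ∀ t ∈ Ioi a, f' t ≤ g t)
    (hlim : Tendsto f atTop (𝓝 m)) : m - f a ≤ ∫ t in Ioi a, g t := by
  refine le_of_tendsto_of_tendsto (hlim.sub_const (f a))
    (intervalIntegral_tendsto_integral_Ioi a hg tendsto_id) ?_
  filter_upwards [eventually_ge_atTop a] with b hab
  exact intervalIntegral.sub_le_integral_of_hasDeriv_right_of_le hab
    (hcont.mono Icc_subset_Ici_self) (fun t ht => hderiv t ht.1)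
    (((integrableOn_Ici_iff_integrableOn_Ioi (by simp)).2 hg).mono_set Icc_subset_Ici_self)
    (fun t ht => hle t ht.1)

lemma integrableOn_pow_mul_exp_neg_mul_Ioi (n : ℕ) {s : ℝ} (hs : 0 < s) :
    IntegrableOn (fun t : ℝ => t ^ n * exp (-(s * t))) (Ioi 0) := by
  have hn : (-1 : ℝ) < n := by linarith [n.cast_nonneg (α := ℝ)]
  simpa using integrableOn_rpow_mul_exp_neg_mul_rpow hn one_pos hs

lemma integral_pow_mul_exp_neg_mul_Ioi (n : ℕ) {s : ℝ} (hs : 0 < s) :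
    ∫ t in Ioi (0 : ℝ), t ^ n * exp (-(s * t)) = n.factorial / s ^ (n + 1) := by
  have h := integral_rpow_mul_exp_neg_mul_Ioi (a := n + 1) (by positivity) hs
  rw [Gamma_nat_eq_factorial, ← Nat.cast_succ, rpow_natCast] at h
  simpa [div_eq_inv_mul] using h

section LaplaceIntegral

variable {φ φ' : ℝ → ℝ} {s c : ℝ} {n : ℕ}

lemma integrableOn_exp_neg_of_mul_le (hs : 0 < s) (hφ : ContinuousOn φ (Ioi 0))
    (hle : ∀ t ∈ Ioi 0, s * t ≤ φ t) : IntegrableOn (fun t => exp (-φ t)) (Ioi 0) := by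
  have hexp : IntegrableOn (fun t => exp (-(s * t))) (Ioi 0) := by
    simpa using integrableOn_pow_mul_exp_neg_mul_Ioi 0 hs
  refine hexp.mono' (hφ.neg.rexp.aestronglyMeasurable measurableSet_Ioi) ?_
  filter_upwards [ae_restrict_mem measurableSet_Ioi] with t ht
  simpa using hle t ht

lemma integral_exp_neg_le_of_mul_le (hs : 0 < s) (hle : ∀ t ∈ Ioi 0, s * t ≤ φ t) :
    ∫ t in Ioi (0 : ℝ), exp (-φ t) ≤ 1 / s := by
  calc ∫ t in Ioi (0 : ℝ), exp (-φ t)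
      ≤ ∫ t in Ioi (0 : ℝ), t ^ 0 * exp (-(s * t)) := by
        refine integral_mono_of_nonneg (.of_forall fun t => (exp_pos _).le)
          (integrableOn_pow_mul_exp_neg_mul_Ioi 0 hs) ?_
        filter_upwards [ae_restrict_mem measurableSet_Ioi] with t ht
        simpa using hle t ht
    _ = 1 / s := by simpa using integral_pow_mul_exp_neg_mul_Ioi 0 hs

lemma tendsto_pow_mul_exp_neg_of_mul_le (n : ℕ) (hs : 0 < s) (hle : ∀ t ∈ Ioi 0, s * t ≤ φ t) :
    Tendsto (fun t => t ^ n * exp (-φ t)) atTop (𝓝 0) := by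
  have hlim : Tendsto (fun t : ℝ => t ^ n * exp (-(s * t))) atTop (𝓝 0) := by
    simpa using tendsto_rpow_mul_exp_neg_mul_atTop_nhds_zero n s hs
  refine squeeze_zero' ?_ ?_ hlim <;> filter_upwards [eventually_gt_atTop 0] with t ht
  · positivity
  · gcongr
    exact hle t ht

lemma hasDerivAt_mul_pow_sub_one_mul_exp_neg {t : ℝ} (hφ : HasDerivAt φ (φ' t) t) :
    HasDerivAt (fun u => (c * u ^ (n + 1) - 1) * exp (-φ u))
      (((1 - c * t ^ (n + 1)) * φ' t + c * (n + 1) * t ^ n) * exp (-φ t)) t := by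
  have hpow : HasDerivAt (fun u => c * u ^ (n + 1) - 1) (c * ((n + 1) * t ^ n)) t := by
    simpa using ((hasDerivAt_pow (n + 1) t).const_mul c).sub_const 1
  exact (hpow.mul hφ.fun_neg.exp).congr_deriv (by ring)

lemma one_sub_le_mul_integral_exp_neg (hs : 0 < s) (hc : 0 ≤ c) (hφ₀ : φ 0 = 0)
    (hφ : ∀ t ∈ Ici 0, HasDerivAt φ (φ' t) t) (hle : ∀ t ∈ Ioi 0, s * t ≤ φ t)
    (hφ' : ∀ t ∈ Ioi 0, (1 - c * t ^ (n + 1)) * φ' t ≤ s) :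
    1 - c * (n + 1).factorial / s ^ (n + 1) ≤ s * ∫ t in Ioi (0 : ℝ), exp (-φ t) := by
  have hderiv (t : ℝ) (ht : t ∈ Ici 0) :=
    hasDerivAt_mul_pow_sub_one_mul_exp_neg (c := c) (n := n) (hφ t ht)
  have hlim : Tendsto (fun t => (c * t ^ (n + 1) - 1) * exp (-φ t)) atTop (𝓝 0) := by
    simpa [sub_mul, mul_assoc] using
      ((tendsto_pow_mul_exp_neg_of_mul_le (n + 1) hs hle).const_mul c).sub
        (tendsto_pow_mul_exp_neg_of_mul_le 0 hs hle)
  have hbound (t : ℝ) (ht : t ∈ Ioi 0) :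
      ((1 - c * t ^ (n + 1)) * φ' t + c * (n + 1) * t ^ n) * exp (-φ t) ≤
        s * exp (-φ t) + c * (n + 1) * (t ^ n * exp (-(s * t))) := by
    have ht₀ : 0 < t := ht
    rw [add_mul, mul_assoc (c * (n + 1))]
    gcongr
    exacts [hφ' t ht, hle t ht]
  have hint_exp := (integrableOn_exp_neg_of_mul_le hs
    (fun t ht => (hφ t (Ioi_subset_Ici_self ht)).continuousAt.continuousWithinAt) hle).const_mul s
  have hint_pow := (integrableOn_pow_mul_exp_neg_mul_Ioi n hs).const_mul (c * (n + 1))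
  have hfactorial : c * (n + 1) * (n.factorial / s ^ (n + 1)) =
      c * (n + 1).factorial / s ^ (n + 1) := by
    rw [Nat.factorial_succ]
    push_cast
    ring
  have hstart : 0 - (c * 0 ^ (n + 1) - 1) * exp (-φ 0) = 1 := by simp [hφ₀]
  have key := sub_le_integral_Ioi_of_hasDeriv_right_of_le
    (fun t ht => (hderiv t ht).continuousAt.continuousWithinAt)
    (fun t ht => (hderiv t (Ioi_subset_Ici_self ht)).hasDerivWithinAt)
    (hint_exp.add hint_pow) hbound hlim
  simp only [Pi.add_apply] at key
  rw [integral_add hint_exp hint_pow, integral_const_mul, integral_const_mul,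
    integral_pow_mul_exp_neg_mul_Ioi n hs, hfactorial, hstart] at key
  linarith

theorem abs_integral_exp_neg_sub_one_div_le (hs : 0 < s) (hc : 0 ≤ c) (hφ₀ : φ 0 = 0)
    (hφ : ∀ t ∈ Ici 0, HasDerivAt φ (φ' t) t) (hle : ∀ t ∈ Ioi 0, s * t ≤ φ t)
    (hφ' : ∀ t ∈ Ioi 0, (1 - c * t ^ (n + 1)) * φ' t ≤ s) :
    |(∫ t in Ioi (0 : ℝ), exp (-φ t)) - 1 / s| ≤ c * (n + 1).factorial / s ^ (n + 2) := by
  have hupper := integral_exp_neg_le_of_mul_le hs hle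
  have hlower : 1 / s - c * (n + 1).factorial / s ^ (n + 2) ≤ ∫ t in Ioi (0 : ℝ), exp (-φ t) := by
    calc 1 / s - c * (n + 1).factorial / s ^ (n + 2)
        = (1 - c * (n + 1).factorial / s ^ (n + 1)) / s := by rw [sub_div, div_div, ← pow_succ]
      _ ≤ ∫ t in Ioi (0 : ℝ), exp (-φ t) :=
        (div_le_iff₀' hs).2 (one_sub_le_mul_integral_exp_neg hs hc hφ₀ hφ hle hφ')
  rw [abs_of_nonpos (sub_nonpos.2 hupper)]
  linarith

end LaplaceIntegral

lemma one_sub_half_sq_mul_cosh_le_one (t : ℝ) : (1 - 1 / 2 * t ^ 2) * cosh t ≤ 1 :=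
  calc (1 - 1 / 2 * t ^ 2) * cosh t
      ≤ exp (-(t ^ 2 / 2)) * exp (t ^ 2 / 2) := by
        gcongr
        · linarith [add_one_le_exp (-(t ^ 2 / 2))]
        · exact cosh_le_exp_half_sq t
    _ = 1 := by rw [← exp_add, neg_add_cancel, exp_zero]

theorem integral_exp_sinh_asymptotics_general {ν x : ℝ} (hν : 0 ≤ ν) (hx : 0 ≤ x)
    (hs : 0 < x + ν) :
    |(∫ t in Ioi (0 : ℝ), exp (-x * sinh t - ν * t)) - 1 / (x + ν)| ≤ 1 / (x + ν) ^ 3 := by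
  have hderiv (t : ℝ) : HasDerivAt (fun t => x * sinh t + ν * t) (x * cosh t + ν) t := by
    simpa using ((hasDerivAt_sinh t).const_mul x).fun_add ((hasDerivAt_id t).const_mul ν)
  have hle (t : ℝ) (ht : t ∈ Ioi 0) : (x + ν) * t ≤ x * sinh t + ν * t := by
    rw [add_mul]
    gcongr
    exact self_le_sinh_iff.2 (le_of_lt ht)
  have hderiv_le (t : ℝ) : (1 - 1 / 2 * t ^ (1 + 1)) * (x * cosh t + ν) ≤ x + ν := by
    calc (1 - 1 / 2 * t ^ (1 + 1)) * (x * cosh t + ν)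
        = x * ((1 - 1 / 2 * t ^ 2) * cosh t) + ν * (1 - 1 / 2 * t ^ 2) := by ring
      _ ≤ x * 1 + ν * 1 := by
        gcongr
        · exact one_sub_half_sq_mul_cosh_le_one t
        · linarith [sq_nonneg t]
      _ = x + ν := by ring
  have key := abs_integral_exp_neg_sub_one_div_le hs (by norm_num) (by simp)
    (fun t _ => hderiv t) hle (fun t _ => hderiv_le t)
  have hphase (t : ℝ) : -x * sinh t - ν * t = -(x * sinh t + ν * t) := by ring
  simp only [hphase]
  simpa using key

/-- the asymptotics `∫₀^∞ e^{-x sinh t - ν t} dt = 1/(x+ν) + O((x+ν)^{-3})`. -/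
theorem integral_exp_sinh_asymptotics :
    ∃ C : ℝ, 0 < C ∧ ∀ ν x : ℝ, 0 ≤ ν → 0 < x → 2 ≤ x + ν →
      |(∫ t in Set.Ioi (0:ℝ), Real.exp (-x * Real.sinh t - ν * t)) - 1 / (x + ν)| ≤
        C / (x + ν) ^ 3 :=
  ⟨1, one_pos, fun _ _ hν hx _ =>
    integral_exp_sinh_asymptotics_general hν hx.le (add_pos_of_pos_of_nonneg hx hν)⟩
end
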